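/- arXiv:1804.09419 — 3 statements merged into one kernel-verified Lean document; each statement's English description precedes it below -/
import Mathlib

section
/- Let 0<α, 1<p<N/α and q>(p−1)N/(N−αp). Let μ be a nonnegative Radon measure on ℝ^N and let μ_n be the measure with density φ_n*μ, where {φ_n} is a sequence of mollifiers. If there is C1>0 such that μ(K) ≤ C1·Cap_{I_{αp}, q/(q−p+1)}(K) for every compact K⊂ℝ^N, then there is a constant C=C(N,α,p,q)>0 such that μ_n(K) ≤ C·C1·Cap_{I_{αp}, q/(q−p+1)}(K) for every compact K⊂ℝ^N and every n∈ℕ. -/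
open MeasureTheory Metric Set Filter Bornology
open scoped ENNReal NNReal Topology RealInnerProductSpace

noncomputable section

/-- Euclidean space `ℝ^N`. -/
abbrev Euc (N : ℕ) : Type := EuclideanSpace ℝ (Fin N)

/-- The `R`-truncated Wolff potential `W^R_{α,p}[μ](x)`; `R = ⊤` gives the full
Wolff potential `W_{α,p}[μ]`. -/
def wolff {N : ℕ} (α p : ℝ) (R : ℝ≥0∞) (μ : Measure (Euc N)) (x : Euc N) : ℝ≥0∞ :=
  ∫⁻ ρ in {ρ : ℝ | 0 < ρ ∧ ENNReal.ofReal ρ < R},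
    (μ (ball x ρ) / ENNReal.ofReal (ρ ^ ((N : ℝ) - α * p))) ^ (1 / (p - 1)) /
      ENNReal.ofReal ρ

/-- The `R`-truncated Riesz potential `I^R_β[μ](x)`; `R = ⊤` gives `I_β[μ]`. -/
def rieszPot {N : ℕ} (β : ℝ) (R : ℝ≥0∞) (μ : Measure (Euc N)) (x : Euc N) : ℝ≥0∞ :=
  ∫⁻ ρ in {ρ : ℝ | 0 < ρ ∧ ENNReal.ofReal ρ < R},
    μ (ball x ρ) / ENNReal.ofReal (ρ ^ ((N : ℝ) - β)) / ENNReal.ofReal ρ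

/-- The Riesz capacity `Cap_{I_α,p}`. -/
def rieszCap (N : ℕ) (α p : ℝ) (O : Set (Euc N)) : ℝ≥0∞ :=
  ⨅ (g : Euc N → ℝ≥0∞) (_ : Measurable g)
    (_ : ∀ x ∈ O, 1 ≤ rieszPot α ⊤ (volume.withDensity g) x),
    ∫⁻ x, g x ^ p

/-- The Bessel kernel of order `α` (up to the normalizing constant `c(N,α)`). -/
def besselKernel (N : ℕ) (α : ℝ) (x : Euc N) : ℝ :=
  ∫ t in Ioi (0 : ℝ),
    Real.exp (-(Real.pi * ‖x‖ ^ 2 / t) - t / (4 * Real.pi)) * t ^ ((α - (N : ℝ)) / 2) / t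

/-- The Bessel capacity `Cap_{G_α,p}`. -/
def besselCap (N : ℕ) (α p : ℝ) (O : Set (Euc N)) : ℝ≥0∞ :=
  ⨅ (g : Euc N → ℝ≥0∞) (_ : Measurable g)
    (_ : ∀ x ∈ O, 1 ≤ ∫⁻ y, ENNReal.ofReal (besselKernel N α (x - y)) * g y),
    ∫⁻ x, g x ^ p

/-- The `R`-truncated fractional maximal function `M^R_γ[μ]`. -/
def fracMax {N : ℕ} (γ : ℝ) (R : ℝ≥0∞) (μ : Measure (Euc N)) (x : Euc N) : ℝ≥0∞ :=
  ⨆ (t : ℝ) (_ : 0 < t) (_ : ENNReal.ofReal t < R),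
    μ (ball x t) / ENNReal.ofReal (t ^ ((N : ℝ) - γ))

/-- The potential `L^R_{α,s}[μ]`. -/
def Lpot {N : ℕ} (α s : ℝ) (R : ℝ≥0∞) (μ : Measure (Euc N)) (x : Euc N) : ℝ≥0∞ :=
  ∫⁻ t in {t : ℝ | 0 < t ∧ ENNReal.ofReal t < R},
    (μ (ball x t) / ENNReal.ofReal (t ^ ((N : ℝ) - α))) ^ s / ENNReal.ofReal t

/-- A mollifier: smooth, nonnegative, supported in the unit ball, of total mass one. -/
def IsMollifier {N : ℕ} (φ : Euc N → ℝ) : Prop :=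
  ContDiff ℝ (⊤ : ℕ∞) φ ∧ (∀ x, 0 ≤ φ x) ∧ tsupport φ ⊆ ball 0 1 ∧ (∫ x, φ x) = 1

/-- The measure with density `φ_n * μ`, where `φ_n(x) = n^N φ(n x)`. -/
def mollified {N : ℕ} (φ : Euc N → ℝ) (n : ℕ) (μ : Measure (Euc N)) : Measure (Euc N) :=
  volume.withDensity fun x =>
    ENNReal.ofReal (∫ y, (n : ℝ) ^ (N : ℕ) * φ ((n : ℝ) • (x - y)) ∂μ)

/-- Translating a density translates the measure of balls. -/
lemma withDensity_translate_ball {N : ℕ} (g : Euc N → ℝ≥0∞) (z x : Euc N) (ρ : ℝ) :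
    (volume.withDensity fun y => g (z + y)) (ball x ρ) = volume.withDensity g (ball (z + x) ρ) := by
  rw [withDensity_apply _ measurableSet_ball, withDensity_apply _ measurableSet_ball,
    ← lintegral_indicator measurableSet_ball, ← lintegral_indicator measurableSet_ball,
    ← lintegral_add_left_eq_self ((ball (z + x) ρ).indicator g) z]
  refine lintegral_congr fun y => ?_
  simp only [indicator, mem_ball, dist_add_left]

/-- The Riesz capacity does not increase under translation. -/
lemma rieszCap_preimage_add_le (N : ℕ) (β s : ℝ) (z : Euc N) (K : Set (Euc N)) :
    rieszCap N β s ((fun y => z + y) ⁻¹' K) ≤ rieszCap N β s K := by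
  refine le_iInf fun g => le_iInf fun hg => le_iInf fun hK => ?_
  rw [← lintegral_add_left_eq_self (fun x => g x ^ s) z]
  refine iInf₂_le_of_le (fun y => g (z + y)) (hg.comp (measurable_const_add z))
    (iInf_le_of_le (fun x hx => ?_) le_rfl)
  have := hK (z + x) hx
  simpa only [rieszPot, withDensity_translate_ball g z] using this

/-- The rescaled mollifier `φ_n` has total mass one. -/
lemma IsMollifier.lintegral_rescale {N : ℕ} {φ : Euc N → ℝ} (hφ : IsMollifier φ) {n : ℕ}
    (hn : 0 < n) :
    ∫⁻ z, ENNReal.ofReal ((n : ℝ) ^ N * φ ((n : ℝ) • z)) = 1 := by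
  obtain ⟨-, hnonneg, -, hint⟩ := hφ
  have hn' : (0 : ℝ) < n := by exact_mod_cast hn
  have hφi : Integrable φ := by
    by_contra h
    simp [integral_undef h] at hint
  rw [← ofReal_integral_eq_lintegral_ofReal
    ((hφi.comp_smul hn'.ne').const_mul _)
    (Eventually.of_forall fun z => mul_nonneg (by positivity) (hnonneg _)),
    integral_const_mul, Measure.integral_comp_smul, hint]
  simp [abs_of_pos (inv_pos.2 (pow_pos hn' N)), hn'.ne']

/-- The mass of a mollified measure is at most the corresponding average of the masses of
translates. -/
lemma mollified_apply_le {N : ℕ} {φ : Euc N → ℝ} (hφ : IsMollifier φ) (n : ℕ)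
    (μ : Measure (Euc N)) [SFinite μ] {K : Set (Euc N)} (hK : MeasurableSet K) :
    mollified φ n μ K ≤
      ∫⁻ z, ENNReal.ofReal ((n : ℝ) ^ N * φ ((n : ℝ) • z)) * μ ((fun y => z + y) ⁻¹' K) := by
  set k : Euc N → ℝ≥0∞ := fun z => ENNReal.ofReal ((n : ℝ) ^ N * φ ((n : ℝ) • z))
  have hφc : Continuous φ := hφ.1.continuous
  have hkm : Measurable k := by
    have hc : Continuous fun z : Euc N => (n : ℝ) ^ N * φ ((n : ℝ) • z) := by fun_prop
    exact hc.measurable.ennreal_ofReal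
  have hKi : Measurable (K.indicator (1 : Euc N → ℝ≥0∞)) := measurable_one.indicator hK
  calc mollified φ n μ K
      ≤ ∫⁻ x in K, ∫⁻ y, k (x - y) ∂μ := by
        rw [mollified, withDensity_apply _ hK]
        refine lintegral_mono fun x => ?_
        rw [integral_eq_lintegral_of_nonneg_ae
          (Eventually.of_forall fun y => mul_nonneg (by positivity) (hφ.2.1 _))
          (by fun_prop : Continuous _).aestronglyMeasurable]
        exact ENNReal.ofReal_toReal_le
    _ = ∫⁻ x, ∫⁻ y, K.indicator 1 x * k (x - y) ∂μ := by
        rw [← lintegral_indicator hK]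
        refine lintegral_congr fun x => ?_
        by_cases hx : x ∈ K <;> simp [hx]
    _ = ∫⁻ y, (∫⁻ x, K.indicator 1 x * k (x - y)) ∂μ := by
        refine lintegral_lintegral_swap (Measurable.aemeasurable ?_)
        exact (hKi.comp measurable_fst).mul (hkm.comp (measurable_fst.sub measurable_snd))
    _ = ∫⁻ y, (∫⁻ z, K.indicator 1 (z + y) * k z) ∂μ := by
        refine lintegral_congr fun y => ?_
        rw [← lintegral_add_right_eq_self (fun x => K.indicator 1 x * k (x - y)) y]
        simp
    _ = ∫⁻ z, ∫⁻ y, K.indicator 1 (z + y) * k z ∂μ := by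
        refine lintegral_lintegral_swap (Measurable.aemeasurable ?_)
        exact (hKi.comp (measurable_snd.add measurable_fst)).mul (hkm.comp measurable_snd)
    _ = ∫⁻ z, k z * μ ((fun y => z + y) ⁻¹' K) := by
        refine lintegral_congr fun z => ?_
        have hm : Measurable fun y => K.indicator (1 : Euc N → ℝ≥0∞) (z + y) :=
          hKi.comp (measurable_const_add z)
        rw [lintegral_mul_const _ hm, mul_comm,
          ← lintegral_indicator_one (measurable_const_add z hK)]
        rfl

/-- Stability of the Riesz-capacity Lipschitz estimate under
mollification. -/
theorem stmt5 (N : ℕ) (α p q : ℝ) (hα : 0 < α) (hp : 1 < p) (hpN : p < (N : ℝ) / α)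
    (hq : (p - 1) * (N : ℝ) / ((N : ℝ) - α * p) < q) :
    ∃ C > 0, ∀ μ : Measure (Euc N), IsLocallyFiniteMeasure μ →
      ∀ φ : Euc N → ℝ, IsMollifier φ →
      ∀ C1 : ℝ, 0 < C1 →
      (∀ K : Set (Euc N), IsCompact K →
        μ K ≤ ENNReal.ofReal C1 * rieszCap N (α * p) (q / (q - p + 1)) K) →
      ∀ n : ℕ, 0 < n → ∀ K : Set (Euc N), IsCompact K →
        mollified φ n μ K ≤ ENNReal.ofReal (C * C1) * rieszCap N (α * p) (q / (q - p + 1)) K := by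
  refine ⟨1, one_pos, fun μ _ φ hφ C1 _ hμ n hn K hK => ?_⟩
  set c := ENNReal.ofReal C1 * rieszCap N (α * p) (q / (q - p + 1)) K
  have hφc : Continuous φ := hφ.1.continuous
  have hm : Continuous fun z : Euc N => (n : ℝ) ^ N * φ ((n : ℝ) • z) := by fun_prop
  calc mollified φ n μ K
      ≤ ∫⁻ z, ENNReal.ofReal ((n : ℝ) ^ N * φ ((n : ℝ) • z)) * μ ((fun y => z + y) ⁻¹' K) :=
        mollified_apply_le hφ n μ hK.measurableSet
    _ ≤ ∫⁻ z, ENNReal.ofReal ((n : ℝ) ^ N * φ ((n : ℝ) • z)) * c := by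
        gcongr with z
        refine (hμ _ ((Homeomorph.addLeft z).isCompact_preimage.2 hK)).trans ?_
        exact mul_le_mul_right (rieszCap_preimage_add_le N _ _ z K) _
    _ = ENNReal.ofReal (1 * C1) * rieszCap N (α * p) (q / (q - p + 1)) K := by
        rw [lintegral_mul_const _ hm.measurable.ennreal_ofReal,
          hφ.lintegral_rescale hn, one_mul, one_mul]
end
end

section
/- Let 0<α, 1<p<N/α, 0<β<N/p and q>p−1. Let ω be a nonnegative bounded Radon measure supported in a ball B_R(x0)⊂ℝ^N. If there is C>0 such that ∫_{ℝ^N} (W^{4R}_{α,p}[χ_{B_t(x)}ω](y))^q dy ≤ C·ω(B_t(x)) for every x∈ℝ^N and t>0, then there exists C2>0 such that W^{4R}_{β,p}[(W^{4R}_{α,p}[ω])^q] ≤ C2·W^{4R}_{β,p}[ω] almost everywhere in B_{2R}(x0). -/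
open MeasureTheory Metric Set Filter Bornology
open scoped ENNReal NNReal Topology RealInnerProductSpace

noncomputable section

lemma ofReal_rpow_rpow {r : ℝ} (hr : 0 < r) (u k : ℝ) :
    (ENNReal.ofReal (r ^ u)) ^ k = ENNReal.ofReal (r ^ (u * k)) := by
  rw [ENNReal.ofReal_rpow_of_pos (Real.rpow_pos_of_pos hr u), Real.rpow_mul hr.le]

lemma ofReal_rpow_mul_ofReal_rpow {r : ℝ} (hr : 0 < r) (u v : ℝ) :
    ENNReal.ofReal (r ^ u) * ENNReal.ofReal (r ^ v) = ENNReal.ofReal (r ^ (u + v)) := by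
  rw [← ENNReal.ofReal_mul (Real.rpow_nonneg hr.le u), Real.rpow_add hr]

lemma ofReal_rpow_inv {r : ℝ} (hr : 0 < r) (u : ℝ) :
    (ENNReal.ofReal (r ^ u))⁻¹ = ENNReal.ofReal (r ^ (-u)) := by
  rw [← ENNReal.ofReal_inv_of_pos (Real.rpow_pos_of_pos hr u), Real.rpow_neg hr.le]

lemma div_rpow_div_eq (m : ℝ≥0∞) {r s : ℝ} (hr : 0 < r) (hs : 0 ≤ s) (a : ℝ) :
    (m / ENNReal.ofReal (r ^ a)) ^ s / ENNReal.ofReal r =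
      m ^ s * ENNReal.ofReal (r ^ (-(a * s) - 1)) := by
  have h1 : ENNReal.ofReal r = ENNReal.ofReal (r ^ (1 : ℝ)) := by rw [Real.rpow_one]
  rw [div_eq_mul_inv, div_eq_mul_inv, ENNReal.mul_rpow_of_nonneg _ _ hs, h1, ofReal_rpow_inv hr,
    ofReal_rpow_inv hr, ofReal_rpow_rpow hr, mul_assoc, ofReal_rpow_mul_ofReal_rpow hr]
  ring_nf

lemma exists_rpow_le_of_mem_Icc {a b : ℝ} (ha : 0 < a) (e : ℝ) :
    ∃ C : ℝ, 0 < C ∧ ∀ r ∈ Icc a b, r ^ e ≤ C := by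
  refine ⟨a ^ e + |b| ^ e, by positivity, fun r hr => ?_⟩
  have hr0 : 0 < r := ha.trans_le hr.1
  rcases le_total 0 e with he | he
  · have := Real.rpow_le_rpow hr0.le (hr.2.trans (le_abs_self b)) he
    have := Real.rpow_pos_of_pos ha e
    linarith
  · have := Real.rpow_le_rpow_of_nonpos ha hr.1 he
    have := Real.rpow_nonneg (abs_nonneg b) e
    linarith

lemma wolff_ofReal_eq {N : ℕ} {α p L : ℝ} (hp : 1 < p) (μ : Measure (Euc N)) (x : Euc N) :
    wolff α p (ENNReal.ofReal L) μ x =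
      ∫⁻ r in Ioo 0 L, μ (ball x r) ^ (1 / (p - 1)) *
        ENNReal.ofReal (r ^ (-(((N : ℝ) - α * p) * (1 / (p - 1))) - 1)) := by
  have hset : {ρ : ℝ | 0 < ρ ∧ ENNReal.ofReal ρ < ENNReal.ofReal L} = Ioo 0 L := by
    ext ρ
    refine and_congr_right fun hρ => ?_
    rw [ENNReal.ofReal_lt_ofReal_iff_of_nonneg hρ.le]
  rw [wolff, hset]
  refine setLIntegral_congr_fun measurableSet_Ioo fun r hr => ?_
  exact div_rpow_div_eq _ hr.1 (one_div_nonneg.2 (by linarith)) _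

lemma measurable_measure_ball {N : ℕ} (μ : Measure (Euc N)) (x : Euc N) :
    Measurable fun r : ℝ => μ (ball x r) :=
  Monotone.measurable fun _ _ h => measure_mono (ball_subset_ball h)

lemma lintegral_Ioo_zero_rpow_sub_one {c r : ℝ} (hc : 0 < c) (hr : 0 < r) :
    ∫⁻ ρ in Ioo 0 r, ENNReal.ofReal (ρ ^ (c - 1)) = ENNReal.ofReal (r ^ c / c) := by
  have hint : IntervalIntegrable (fun ρ : ℝ => ρ ^ (c - 1)) volume 0 r :=
    intervalIntegral.intervalIntegrable_rpow' (by linarith)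
  rw [setLIntegral_congr Ioo_ae_eq_Ioc, ← ofReal_integral_eq_lintegral_ofReal
    ((intervalIntegrable_iff_integrableOn_Ioc_of_le hr.le).1 hint)
    ((ae_restrict_mem measurableSet_Ioc).mono fun ρ hρ => Real.rpow_nonneg hρ.1.le _),
    ← intervalIntegral.integral_of_le hr.le, integral_rpow (Or.inl (by linarith))]
  simp [Real.zero_rpow hc.ne']

lemma lintegral_Ioi_rpow_neg_sub_one {c ρ : ℝ} (hc : 0 < c) (hρ : 0 < ρ) :
    ∫⁻ r in Ioi ρ, ENNReal.ofReal (r ^ (-c - 1)) = ENNReal.ofReal (ρ ^ (-c) / c) := by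
  rw [← ofReal_integral_eq_lintegral_ofReal
    (integrableOn_Ioi_rpow_of_lt (by linarith) hρ)
    ((ae_restrict_mem measurableSet_Ioi).mono fun r hr => Real.rpow_nonneg (hρ.trans hr).le _),
    integral_Ioi_rpow_of_lt (by linarith) hρ]
  congr 1
  rw [sub_add_cancel, neg_div_neg_eq]

lemma rpow_lintegral_Ioo_le {k ε : ℝ} (hk : 1 < k) (hε : 0 < ε) {L : ℝ} {F : ℝ → ℝ≥0∞}
    (hF : Measurable F) {ρ : ℝ} (hρ : 0 < ρ) :
    (∫⁻ r in Ioo ρ L, F r * ENNReal.ofReal (r ^ (-1 : ℝ))) ^ k ≤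
      ENNReal.ofReal ((1 / (ε * (k / (k - 1)))) ^ (k - 1)) * ENNReal.ofReal (ρ ^ (-(ε * k))) *
        ∫⁻ r in Ioo ρ L, F r ^ k * ENNReal.ofReal (r ^ (ε * k - 1)) := by
  have hk0 : 0 < k := by linarith
  have hk1 : 0 < k - 1 := by linarith
  set k' := k / (k - 1) with hk'
  have hk'0 : 0 < k' := by positivity
  have hconj : k'.HolderConjugate k := by
    have := Real.HolderConjugate.conjExponent hk
    exact this.symm
  have hfac : ∫⁻ r in Ioo ρ L, F r * ENNReal.ofReal (r ^ (-1 : ℝ)) =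
      ∫⁻ r in Ioo ρ L, ((fun r : ℝ => ENNReal.ofReal (r ^ (-ε - 1 / k'))) *
        fun r : ℝ => F r * ENNReal.ofReal (r ^ (ε - 1 / k))) r := by
    refine setLIntegral_congr_fun measurableSet_Ioo fun r hr => ?_
    simp only [Pi.mul_apply]
    rw [mul_left_comm, ofReal_rpow_mul_ofReal_rpow (hρ.trans hr.1)]
    congr 3
    rw [hk']
    field_simp
    ring
  have hmeas (u : ℝ) : Measurable fun r : ℝ => ENNReal.ofReal (r ^ u) := by fun_prop
  have hholder := ENNReal.lintegral_mul_le_Lp_mul_Lq (volume.restrict (Ioo ρ L)) hconj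
    (hmeas (-ε - 1 / k')).aemeasurable (hF.mul (hmeas (ε - 1 / k))).aemeasurable
  have h1 : ∫⁻ r in Ioo ρ L, ENNReal.ofReal (r ^ (-ε - 1 / k')) ^ k' ≤
      ENNReal.ofReal (ρ ^ (-(ε * k')) / (ε * k')) := by
    rw [← lintegral_Ioi_rpow_neg_sub_one (by positivity) hρ]
    refine (setLIntegral_congr_fun measurableSet_Ioo fun r hr => ?_).trans_le
      (lintegral_mono_set Ioo_subset_Ioi_self)
    rw [ofReal_rpow_rpow (hρ.trans hr.1)]
    congr 2
    field_simp
  have h2 : ∫⁻ r in Ioo ρ L, (F r * ENNReal.ofReal (r ^ (ε - 1 / k))) ^ k =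
      ∫⁻ r in Ioo ρ L, F r ^ k * ENNReal.ofReal (r ^ (ε * k - 1)) := by
    refine setLIntegral_congr_fun measurableSet_Ioo fun r hr => ?_
    rw [ENNReal.mul_rpow_of_nonneg _ _ hk0.le, ofReal_rpow_rpow (hρ.trans hr.1)]
    congr 3
    field_simp
  rw [hfac]
  calc _ ≤ ((∫⁻ r in Ioo ρ L, ENNReal.ofReal (r ^ (-ε - 1 / k')) ^ k') ^ (1 / k') *
          (∫⁻ r in Ioo ρ L, (F r * ENNReal.ofReal (r ^ (ε - 1 / k))) ^ k) ^ (1 / k)) ^ k :=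
        ENNReal.rpow_le_rpow hholder hk0.le
    _ = (∫⁻ r in Ioo ρ L, ENNReal.ofReal (r ^ (-ε - 1 / k')) ^ k') ^ (k - 1) *
          (∫⁻ r in Ioo ρ L, F r ^ k * ENNReal.ofReal (r ^ (ε * k - 1))) := by
        rw [h2, ENNReal.mul_rpow_of_nonneg _ _ hk0.le, ← ENNReal.rpow_mul, ← ENNReal.rpow_mul,
          one_div_mul_cancel hk0.ne', ENNReal.rpow_one]
        congr 2
        rw [hk']
        field_simp
    _ ≤ ENNReal.ofReal (ρ ^ (-(ε * k')) / (ε * k')) ^ (k - 1) *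
          (∫⁻ r in Ioo ρ L, F r ^ k * ENNReal.ofReal (r ^ (ε * k - 1))) := by gcongr
    _ = _ := by
        congr 1
        rw [← ENNReal.ofReal_mul (by positivity), div_eq_mul_one_div,
          ENNReal.ofReal_rpow_of_nonneg (by positivity) hk1.le,
          Real.mul_rpow (by positivity) (by positivity), ← Real.rpow_mul hρ.le, mul_comm]
        congr 3
        rw [hk']
        field_simp

lemma lintegral_Ioo_mul_lintegral_Ioo {L c : ℝ} (hc : 0 < c) {G : ℝ → ℝ≥0∞} (hG : Measurable G) :
    ∫⁻ ρ in Ioo 0 L, ENNReal.ofReal (ρ ^ (c - 1)) * ∫⁻ r in Ioo ρ L, G r =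
      ∫⁻ r in Ioo 0 L, G r * ENNReal.ofReal (r ^ c / c) := by
  have hm : Measurable (Function.uncurry fun ρ r : ℝ =>
      ENNReal.ofReal (ρ ^ (c - 1)) * (Ioi ρ).indicator G r) := by
    have : (Function.uncurry fun ρ r : ℝ => ENNReal.ofReal (ρ ^ (c - 1)) * (Ioi ρ).indicator G r) =
        fun z : ℝ × ℝ => ENNReal.ofReal (z.1 ^ (c - 1)) *
          {z : ℝ × ℝ | z.1 < z.2}.indicator (fun z => G z.2) z := by
      ext ⟨ρ, r⟩
      simp [Function.uncurry, indicator]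
    rw [this]
    refine Measurable.mul (by fun_prop) ?_
    exact (hG.comp measurable_snd).indicator (measurableSet_lt measurable_fst measurable_snd)
  calc _ = ∫⁻ ρ in Ioo 0 L, ∫⁻ r in Ioo 0 L,
        ENNReal.ofReal (ρ ^ (c - 1)) * (Ioi ρ).indicator G r := by
        refine setLIntegral_congr_fun measurableSet_Ioo fun ρ hρ => ?_
        rw [lintegral_const_mul' _ _ ENNReal.ofReal_ne_top, setLIntegral_indicator measurableSet_Ioi]
        congr 3
        ext r
        simp only [mem_Ioo, mem_inter_iff, mem_Ioi]
        exact ⟨fun h => ⟨h.1, hρ.1.trans h.1, h.2⟩, fun h => ⟨h.1, h.2.2⟩⟩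
    _ = ∫⁻ r in Ioo 0 L, ∫⁻ ρ in Ioo 0 L,
        ENNReal.ofReal (ρ ^ (c - 1)) * (Ioi ρ).indicator G r :=
        lintegral_lintegral_swap hm.aemeasurable
    _ = _ := by
        refine setLIntegral_congr_fun measurableSet_Ioo fun r hr => ?_
        have : (fun ρ : ℝ => ENNReal.ofReal (ρ ^ (c - 1)) * (Ioi ρ).indicator G r) =
            fun ρ => (Iio r).indicator (fun ρ => ENNReal.ofReal (ρ ^ (c - 1)) * G r) ρ := by
          ext ρ
          by_cases h : ρ < r <;> simp [h]
        rw [this, setLIntegral_indicator measurableSet_Iio, lintegral_mul_const _ (by fun_prop),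
          mul_comm, ← lintegral_Ioo_zero_rpow_sub_one hc hr.1]
        congr 3
        ext ρ
        simp only [mem_Ioo, mem_inter_iff, mem_Iio]
        exact ⟨fun h => ⟨h.2.1, h.1⟩, fun h => ⟨h.2, h.1, h.2.trans hr.2⟩⟩

/-- A weighted Hardy inequality on `(0, L)`. -/
lemma exists_hardy_le {k b : ℝ} (hk : 1 < k) (hb : 0 < b) :
    ∃ C : ℝ≥0∞, C ≠ ⊤ ∧ ∀ (L : ℝ) (F : ℝ → ℝ≥0∞), Measurable F →
      ∫⁻ ρ in Ioo 0 L, ENNReal.ofReal (ρ ^ (b - 1)) *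
          (∫⁻ r in Ioo ρ L, F r * ENNReal.ofReal (r ^ (-1 : ℝ))) ^ k ≤
        C * ∫⁻ r in Ioo 0 L, F r ^ k * ENNReal.ofReal (r ^ (b - 1)) := by
  have hk0 : 0 < k := by linarith
  set ε := b / (2 * k) with hε
  have hεk : ε * k = b / 2 := by rw [hε]; field_simp
  have hε0 : 0 < ε := by positivity
  set A := ENNReal.ofReal ((1 / (ε * (k / (k - 1)))) ^ (k - 1)) with hA
  have hAt : A ≠ ⊤ := ENNReal.ofReal_ne_top
  refine ⟨A * ENNReal.ofReal (1 / (b / 2)), ENNReal.mul_ne_top hAt ENNReal.ofReal_ne_top,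
    fun L F hF => ?_⟩
  calc _ ≤ ∫⁻ ρ in Ioo 0 L, A * (ENNReal.ofReal (ρ ^ (b / 2 - 1)) *
        ∫⁻ r in Ioo ρ L, F r ^ k * ENNReal.ofReal (r ^ (b / 2 - 1))) := by
        refine setLIntegral_mono' measurableSet_Ioo fun ρ hρ => ?_
        refine (mul_le_mul_right (rpow_lintegral_Ioo_le hk hε0 hF hρ.1) _).trans_eq ?_
        rw [← hA, hεk, mul_assoc A, mul_left_comm _ A,
          ← mul_assoc (ENNReal.ofReal (ρ ^ (b - 1))), ofReal_rpow_mul_ofReal_rpow hρ.1]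
        ring_nf
    _ = A * ∫⁻ r in Ioo 0 L, F r ^ k * ENNReal.ofReal (r ^ (b / 2 - 1)) *
          ENNReal.ofReal (r ^ (b / 2) / (b / 2)) := by
        rw [lintegral_const_mul' _ _ hAt, lintegral_Ioo_mul_lintegral_Ioo (by positivity)]
        exact (hF.pow_const k).mul (by fun_prop)
    _ = A * ∫⁻ r in Ioo 0 L, ENNReal.ofReal (1 / (b / 2)) *
          (F r ^ k * ENNReal.ofReal (r ^ (b - 1))) := by
        congr 1
        refine setLIntegral_congr_fun measurableSet_Ioo fun r hr => ?_
        rw [div_eq_mul_one_div (r ^ (b / 2)), ENNReal.ofReal_mul (Real.rpow_nonneg hr.1.le _), mul_assoc,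
          ← mul_assoc (ENNReal.ofReal (r ^ (b / 2 - 1))), ofReal_rpow_mul_ofReal_rpow hr.1]
        ring_nf
    _ = _ := by rw [lintegral_const_mul' _ _ ENNReal.ofReal_ne_top, mul_assoc]

lemma lintegral_Ioo_comp_two_mul (f : ℝ → ℝ≥0∞) (L : ℝ) :
    ∫⁻ r in Ioo 0 L, f (2 * r) = ENNReal.ofReal (1 / 2) * ∫⁻ r in Ioo 0 (2 * L), f r := by
  have himage : (fun r : ℝ => 2 * r) '' Ioo 0 L = Ioo 0 (2 * L) := by
    rw [image_mul_left_Ioo (by norm_num), mul_zero]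
  have := lintegral_image_eq_lintegral_abs_deriv_mul (f := fun r : ℝ => 2 * r) (f' := fun _ => 2)
    (s := Ioo 0 L) measurableSet_Ioo
    (fun r _ => by simpa using ((hasDerivAt_id r).const_mul 2).hasDerivWithinAt)
    (fun _ _ _ _ h => by simpa using h) f
  rw [← himage, this, lintegral_const_mul' _ _ ENNReal.ofReal_ne_top, ← mul_assoc,
    ← ENNReal.ofReal_mul (by norm_num)]
  norm_num

lemma add_rpow_le_two_rpow_mul (u v : ℝ≥0∞) {s : ℝ} (hs : 0 ≤ s) :
    (u + v) ^ s ≤ 2 ^ s * (u ^ s + v ^ s) := by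
  have hmax : u + v ≤ 2 * max u v := by
    rw [two_mul]
    exact add_le_add (le_max_left _ _) (le_max_right _ _)
  calc (u + v) ^ s ≤ (2 * max u v) ^ s := ENNReal.rpow_le_rpow hmax hs
    _ = 2 ^ s * (max u v) ^ s := ENNReal.mul_rpow_of_nonneg _ _ hs
    _ ≤ 2 ^ s * (u ^ s + v ^ s) := by
        gcongr
        rcases le_total u v with h | h
        · rw [max_eq_right h]; exact le_add_self
        · rw [max_eq_left h]; exact le_self_add

lemma le_wolff_restrict_ball {N : ℕ} {α p L t : ℝ} (hp : 1 < p) (hαp : α * p ≤ N)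
    (μ : Measure (Euc N)) {x y : Euc N} (ht : 0 < t) (htL : 3 * t ≤ L) (hy : y ∈ ball x t) :
    μ (ball x t) ^ (1 / (p - 1)) *
        ENNReal.ofReal (3 ^ (-((N - α * p) * (1 / (p - 1))) - 1) *
          t ^ (-((N - α * p) * (1 / (p - 1))))) ≤
      wolff α p (ENNReal.ofReal L) (μ.restrict (ball x t)) y := by
  have hs : 0 ≤ 1 / (p - 1) := one_div_nonneg.2 (by linarith)
  set s := 1 / (p - 1)
  have ha : 0 ≤ ((N : ℝ) - α * p) * s := mul_nonneg (by linarith) hs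
  set a := ((N : ℝ) - α * p) * s
  have ht0 : 0 < 2 * t := by positivity
  rw [wolff_ofReal_eq hp]
  calc _ = ∫⁻ _ in Ioo (2 * t) (3 * t),
        μ (ball x t) ^ s * ENNReal.ofReal ((3 * t) ^ (-a - 1)) := by
        rw [setLIntegral_const, Real.volume_Ioo, mul_assoc, ← ENNReal.ofReal_mul (by positivity)]
        congr 2
        rw [Real.mul_rpow (by norm_num) ht.le, Real.rpow_sub_one ht.ne' (-a)]
        field_simp
        ring
    _ ≤ ∫⁻ r in Ioo (2 * t) (3 * t), (μ.restrict (ball x t)) (ball y r) ^ s *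
          ENNReal.ofReal (r ^ (-a - 1)) := by
        refine setLIntegral_mono' measurableSet_Ioo fun r hr => ?_
        have hsub : ball x t ⊆ ball y r :=
          ball_subset_ball' (by rw [dist_comm]; linarith [mem_ball.1 hy, hr.1])
        rw [Measure.restrict_apply measurableSet_ball, inter_eq_right.2 hsub]
        have hpow : (3 * t) ^ (-a - 1) ≤ r ^ (-a - 1) :=
          Real.rpow_le_rpow_of_nonpos (ht0.trans hr.1) hr.2.le (by linarith)
        gcongr
    _ ≤ _ := lintegral_mono_set (Ioo_subset_Ioo (by linarith) htL)

lemma volume_ball_eq {N : ℕ} (x : Euc N) {t : ℝ} (ht : 0 < t) :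
    volume (ball x t) = ENNReal.ofReal (t ^ (N : ℝ)) * volume (ball (0 : Euc N) 1) := by
  rw [Measure.addHaar_ball_of_pos _ _ ht, finrank_euclideanSpace_fin, Real.rpow_natCast]

/-- Testing the energy on small balls forces a power growth of the measure of balls. -/
lemma exists_measure_ball_rpow_le {N : ℕ} {α p q L : ℝ} (hp : 1 < p) (hαp : α * p ≤ N)
    (hq : p - 1 < q) (μ : Measure (Euc N)) [IsFiniteMeasure μ] {C : ℝ≥0∞} (hC : C ≠ ⊤)
    (h : ∀ (x : Euc N) (t : ℝ), 0 < t →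
      ∫⁻ y, (wolff α p (ENNReal.ofReal L) (μ.restrict (ball x t)) y) ^ q ≤ C * μ (ball x t)) :
    ∃ K : ℝ≥0∞, K ≠ ⊤ ∧ ∀ (x : Euc N) (t : ℝ), 0 < t → 3 * t ≤ L →
      μ (ball x t) ^ (q * (1 / (p - 1)) - 1) ≤
        K * ENNReal.ofReal (t ^ (((N : ℝ) - α * p) * (1 / (p - 1)) * q - N)) := by
  have hp1 : 0 < p - 1 := by linarith
  have hq0 : 0 < q := by linarith
  have hk : 0 < q * (1 / (p - 1)) - 1 := by
    rw [mul_one_div, sub_pos, one_lt_div hp1]; exact hq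
  have hL := fun (x y : Euc N) (t : ℝ) (ht : 0 < t) (htL : 3 * t ≤ L) (hy : y ∈ ball x t) =>
    le_wolff_restrict_ball hp hαp μ ht htL hy
  set s := 1 / (p - 1)
  set a := ((N : ℝ) - α * p) * s
  have hV0 : volume (ball (0 : Euc N) 1) ≠ 0 := (measure_ball_pos _ _ one_pos).ne'
  have hVt : volume (ball (0 : Euc N) 1) ≠ ⊤ := measure_ball_lt_top.ne
  set V := volume (ball (0 : Euc N) 1)
  set D := ENNReal.ofReal ((3 : ℝ) ^ ((-a - 1) * q)) * V with hD
  have hc : 0 < (3 : ℝ) ^ ((-a - 1) * q) := by positivity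
  have hD0 : D ≠ 0 := mul_ne_zero (ENNReal.ofReal_pos.2 hc).ne' hV0
  have hDt : D ≠ ⊤ := ENNReal.mul_ne_top ENNReal.ofReal_ne_top hVt
  refine ⟨C / D, ENNReal.div_ne_top hC hD0, fun x t ht htL => ?_⟩
  rcases eq_or_ne (μ (ball x t)) 0 with hm0 | hm0
  · rw [hm0, ENNReal.zero_rpow_of_pos hk]; exact zero_le
  have hmt : μ (ball x t) ≠ ⊤ := measure_ne_top _ _
  have htest : (μ (ball x t) ^ s * ENNReal.ofReal (3 ^ (-a - 1) * t ^ (-a))) ^ q *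
      volume (ball x t) ≤ C * μ (ball x t) := by
    refine le_trans ?_ (h x t ht)
    rw [← setLIntegral_const]
    refine (setLIntegral_mono' measurableSet_ball fun y hy => ?_).trans
      (setLIntegral_le_lintegral _ _)
    exact ENNReal.rpow_le_rpow (hL x y t ht htL hy) hq0.le
  have hrw : (μ (ball x t) ^ s * ENNReal.ofReal (3 ^ (-a - 1) * t ^ (-a))) ^ q *
      volume (ball x t) =
      μ (ball x t) ^ (q * s - 1) * D * ENNReal.ofReal (t ^ (N - a * q)) * μ (ball x t) := by
    have h1 : μ (ball x t) ^ (s * q) = μ (ball x t) ^ (q * s - 1) * μ (ball x t) := by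
      conv_rhs => rw [← ENNReal.rpow_one (μ (ball x t)), ← ENNReal.rpow_mul, one_mul,
        ← ENNReal.rpow_add _ _ hm0 hmt]
      ring_nf
    have h2 : ENNReal.ofReal (t ^ ((N : ℝ) - a * q)) =
        ENNReal.ofReal (t ^ (-a * q)) * ENNReal.ofReal (t ^ (N : ℝ)) := by
      rw [ofReal_rpow_mul_ofReal_rpow ht]; ring_nf
    rw [ENNReal.mul_rpow_of_nonneg _ _ hq0.le, ← ENNReal.rpow_mul, h1,
      ENNReal.ofReal_mul (by positivity), ENNReal.mul_rpow_of_nonneg _ _ hq0.le,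
      ofReal_rpow_rpow (by norm_num), ofReal_rpow_rpow ht, volume_ball_eq x ht, h2, hD]
    ring
  rw [hrw] at htest
  have hcancel := (ENNReal.mul_le_mul_iff_left hm0 hmt).1 htest
  have hsub : a * q - N = -(N - a * q) := by ring
  have hpos := Real.rpow_pos_of_pos ht ((N : ℝ) - a * q)
  rw [hsub, ← ofReal_rpow_inv ht, ← div_eq_mul_inv,
    ENNReal.le_div_iff_mul_le (Or.inl (ENNReal.ofReal_pos.2 hpos).ne')
      (Or.inl ENNReal.ofReal_ne_top),
    ENNReal.le_div_iff_mul_le (Or.inl hD0) (Or.inl hDt)]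
  refine le_trans (le_of_eq ?_) hcancel
  ring

lemma exists_measure_ball_two_mul_rpow_le {N : ℕ} {k e T L : ℝ} (hk : 0 ≤ k) (hT : 0 < T)
    (μ : Measure (Euc N)) [IsFiniteMeasure μ]
    (h : ∃ K : ℝ≥0∞, K ≠ ⊤ ∧ ∀ (x : Euc N) (t : ℝ), 0 < t → t ≤ T →
      μ (ball x t) ^ k ≤ K * ENNReal.ofReal (t ^ e)) :
    ∃ K : ℝ≥0∞, K ≠ ⊤ ∧ ∀ (x : Euc N), ∀ r ∈ Ioo 0 L,
      μ (ball x (2 * r)) ^ k ≤ K * ENNReal.ofReal (r ^ e) := by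
  obtain ⟨K, hK, hKb⟩ := h
  obtain ⟨C, hC, hCb⟩ := exists_rpow_le_of_mem_Icc (a := T / 2) (b := L) (by positivity) (-e)
  refine ⟨K * ENNReal.ofReal (2 ^ e) + μ univ ^ k * ENNReal.ofReal C, ?_, fun x r hr => ?_⟩
  · exact ENNReal.add_ne_top.2 ⟨ENNReal.mul_ne_top hK ENNReal.ofReal_ne_top, ENNReal.mul_ne_top
      (ENNReal.rpow_ne_top_of_nonneg hk (measure_ne_top _ _)) ENNReal.ofReal_ne_top⟩
  rw [add_mul]
  rcases le_total (2 * r) T with hrT | hrT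
  · refine le_add_right ((hKb x (2 * r) (by linarith [hr.1]) hrT).trans_eq ?_)
    rw [Real.mul_rpow (by norm_num) hr.1.le, ENNReal.ofReal_mul (by positivity), mul_assoc]
  · refine le_add_left ?_
    calc μ (ball x (2 * r)) ^ k ≤ μ univ ^ k :=
          ENNReal.rpow_le_rpow (measure_mono (subset_univ _)) hk
      _ = μ univ ^ k * ENNReal.ofReal (r ^ (-e)) * ENNReal.ofReal (r ^ e) := by
          rw [mul_assoc, ofReal_rpow_mul_ofReal_rpow hr.1, neg_add_cancel, Real.rpow_zero,
            ENNReal.ofReal_one, mul_one]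
      _ ≤ _ := by
          gcongr
          exact hCb r ⟨by linarith, hr.2.le⟩

/-- For a measure carried by `B_R(x₀)`, doubling the radii costs only a constant on
`B_{2R}(x₀)`. -/
lemma lintegral_measure_ball_two_mul_le {N : ℕ} {s d R : ℝ} (hs : 0 ≤ s) (hd : 0 ≤ d) (hR : 0 < R)
    {x0 x : Euc N} {μ : Measure (Euc N)} (hsupp : μ (ball x0 R)ᶜ = 0) (hx : x ∈ ball x0 (2 * R)) :
    ∫⁻ r in Ioo 0 (4 * R), μ (ball x (2 * r)) ^ s * ENNReal.ofReal (r ^ (-d - 1)) ≤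
      ENNReal.ofReal (5 * 2 ^ d) *
        ∫⁻ r in Ioo 0 (4 * R), μ (ball x r) ^ s * ENNReal.ofReal (r ^ (-d - 1)) := by
  set f : ℝ → ℝ≥0∞ := fun r => μ (ball x r) ^ s * ENNReal.ofReal (r ^ (-d - 1)) with hf
  have hscale : ∫⁻ r in Ioo 0 (4 * R), μ (ball x (2 * r)) ^ s * ENNReal.ofReal (r ^ (-d - 1)) =
      ENNReal.ofReal (2 ^ d) * ∫⁻ r in Ioo 0 (2 * (4 * R)), f r := by
    calc _ = ∫⁻ r in Ioo 0 (4 * R), ENNReal.ofReal (2 ^ (d + 1)) * f (2 * r) := by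
          refine setLIntegral_congr_fun measurableSet_Ioo fun r hr => ?_
          simp only [hf]
          rw [mul_left_comm, ← ENNReal.ofReal_mul (by positivity),
            Real.mul_rpow (by norm_num) hr.1.le, ← mul_assoc, ← Real.rpow_add (by norm_num)]
          ring_nf
          simp
      _ = _ := by
          rw [lintegral_const_mul' _ _ ENNReal.ofReal_ne_top, lintegral_Ioo_comp_two_mul,
            ← mul_assoc, ← ENNReal.ofReal_mul (by positivity), Real.rpow_add_one (by norm_num)]
          congr 3
          ring
  have hfar : ∫⁻ r in Ico (4 * R) (2 * (4 * R)), f r ≤ 4 * ∫⁻ r in Ioo 0 (4 * R), f r := by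
    have hfull : ∀ r ∈ Ioo (3 * R) (4 * R), μ univ ≤ μ (ball x r) := by
      intro r hr
      have hsub : ball x0 R ⊆ ball x r :=
        ball_subset_ball' (by rw [dist_comm]; linarith [mem_ball.1 hx, hr.1])
      calc μ univ = μ (ball x0 R ∪ (ball x0 R)ᶜ) := by rw [union_compl_self]
        _ ≤ μ (ball x0 R) + μ (ball x0 R)ᶜ := measure_union_le _ _
        _ ≤ μ (ball x r) := by rw [hsupp, add_zero]; exact measure_mono hsub
    calc _ ≤ ∫⁻ _ in Ico (4 * R) (2 * (4 * R)),
          μ univ ^ s * ENNReal.ofReal ((4 * R) ^ (-d - 1)) := by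
          refine setLIntegral_mono' measurableSet_Ico fun r hr => ?_
          simp only [hf]
          gcongr ?_ ^ s * ENNReal.ofReal ?_
          · exact measure_mono (subset_univ _)
          · exact Real.rpow_le_rpow_of_nonpos (by linarith) hr.1 (by linarith)
      _ = 4 * ∫⁻ _ in Ioo (3 * R) (4 * R),
          μ univ ^ s * ENNReal.ofReal ((4 * R) ^ (-d - 1)) := by
          rw [setLIntegral_const, setLIntegral_const, Real.volume_Ico, Real.volume_Ioo,
            show 2 * (4 * R) - 4 * R = 4 * (4 * R - 3 * R) by ring,
            ENNReal.ofReal_mul (by norm_num), ENNReal.ofReal_ofNat]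
          ring
      _ ≤ 4 * ∫⁻ r in Ioo (3 * R) (4 * R), f r := by
          gcongr 4 * ?_
          refine setLIntegral_mono' measurableSet_Ioo fun r hr => ?_
          simp only [hf]
          gcongr ?_ ^ s * ENNReal.ofReal ?_
          · exact hfull r hr
          · exact Real.rpow_le_rpow_of_nonpos (by linarith [hr.1]) hr.2.le (by linarith)
      _ ≤ _ := by
          gcongr 4 * ?_
          exact lintegral_mono_set (Ioo_subset_Ioo_left (by positivity))
  have hunion : Ioo 0 (2 * (4 * R)) = Ioo 0 (4 * R) ∪ Ico (4 * R) (2 * (4 * R)) :=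
    (Ioo_union_Ico_eq_Ioo (by positivity) (by linarith)).symm
  rw [hscale, mul_comm 5, ENNReal.ofReal_mul (by positivity), mul_assoc]
  gcongr
  rw [hunion]
  refine (lintegral_union_le _ _ _).trans ((add_le_add_right hfar _).trans_eq ?_)
  rw [ENNReal.ofReal_ofNat]
  ring

/-- Splitting the potential at the scale of the ball on which it is integrated. -/
lemma setLIntegral_wolff_rpow_le {N : ℕ} {α p q L : ℝ} (hp : 1 < p) (hq : 0 ≤ q)
    (μ : Measure (Euc N)) {C : ℝ≥0∞}
    (h : ∀ (x : Euc N) (t : ℝ), 0 < t →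
      ∫⁻ y, (wolff α p (ENNReal.ofReal L) (μ.restrict (ball x t)) y) ^ q ≤ C * μ (ball x t))
    (x : Euc N) {ρ : ℝ} (hρ : 0 < ρ) :
    ∫⁻ y in ball x ρ, (wolff α p (ENNReal.ofReal L) μ y) ^ q ≤
      2 ^ q * (C * μ (ball x (2 * ρ)) + ENNReal.ofReal (ρ ^ (N : ℝ)) * volume (ball (0 : Euc N) 1) *
        (∫⁻ r in Ioo ρ L, μ (ball x (2 * r)) ^ (1 / (p - 1)) *
          ENNReal.ofReal (r ^ (-(((N : ℝ) - α * p) * (1 / (p - 1))))) *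
            ENNReal.ofReal (r ^ (-1 : ℝ))) ^ q) := by
  have hs : 0 ≤ 1 / (p - 1) := one_div_nonneg.2 (by linarith)
  have h2q : (2 : ℝ≥0∞) ^ q ≠ ⊤ := ENNReal.rpow_ne_top_of_nonneg hq (by norm_num)
  set g := ∫⁻ r in Ioo ρ L, μ (ball x (2 * r)) ^ (1 / (p - 1)) *
    ENNReal.ofReal (r ^ (-(((N : ℝ) - α * p) * (1 / (p - 1))))) * ENNReal.ofReal (r ^ (-1 : ℝ))
  have hsplit : ∀ y ∈ ball x ρ, wolff α p (ENNReal.ofReal L) μ y ≤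
      wolff α p (ENNReal.ofReal L) (μ.restrict (ball x (2 * ρ))) y + g := by
    intro y hy
    rw [wolff_ofReal_eq hp, wolff_ofReal_eq hp]
    have hsub : Ioo 0 L ⊆ (Ioc 0 ρ ∩ Ioo 0 L) ∪ Ioo ρ L := fun r hr => by
      rcases le_or_gt r ρ with hrρ | hrρ
      · exact Or.inl ⟨⟨hr.1, hrρ⟩, hr⟩
      · exact Or.inr ⟨hrρ, hr.2⟩
    refine (lintegral_mono_set hsub).trans ((lintegral_union_le _ _ _).trans (add_le_add ?_ ?_))
    · refine le_trans ?_ (lintegral_mono_set (inter_subset_right (s := Ioc 0 ρ)))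
      refine setLIntegral_mono' (measurableSet_Ioc.inter measurableSet_Ioo) fun r hr => ?_
      have hsub : ball y r ⊆ ball x (2 * ρ) :=
        ball_subset_ball' (by linarith [mem_ball.1 hy, hr.1.2])
      rw [Measure.restrict_apply measurableSet_ball, inter_eq_left.2 hsub]
    · refine setLIntegral_mono' measurableSet_Ioo fun r hr => ?_
      have hsub : ball y r ⊆ ball x (2 * r) :=
        ball_subset_ball' (by linarith [mem_ball.1 hy, hr.1])
      rw [mul_assoc, ofReal_rpow_mul_ofReal_rpow (hρ.trans hr.1), ← sub_eq_add_neg]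
      gcongr
  calc _ ≤ ∫⁻ y in ball x ρ, 2 ^ q *
        ((wolff α p (ENNReal.ofReal L) (μ.restrict (ball x (2 * ρ))) y) ^ q + g ^ q) := by
        refine setLIntegral_mono' measurableSet_ball fun y hy => ?_
        exact (ENNReal.rpow_le_rpow (hsplit y hy) hq).trans (add_rpow_le_two_rpow_mul _ _ hq)
    _ = 2 ^ q * ((∫⁻ y in ball x ρ,
        (wolff α p (ENNReal.ofReal L) (μ.restrict (ball x (2 * ρ))) y) ^ q) +
          g ^ q * volume (ball x ρ)) := by
        rw [lintegral_const_mul' _ _ h2q, lintegral_add_right _ measurable_const, setLIntegral_const]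
    _ ≤ _ := by
        rw [volume_ball_eq x hρ, mul_comm (g ^ q)]
        gcongr
        exact (setLIntegral_le_lintegral _ _).trans (h x (2 * ρ) (by positivity))

/-- The nonlocal part of the iterated potential, controlled by the growth of the measure of
balls through the Hardy inequality. -/
lemma exists_lintegral_tail_le {s k a b e d L : ℝ} (hs : 0 < s) (hk : 1 < k) (hb : 0 < b)
    (hexp : s * e - a * k + b = -d) {K : ℝ≥0∞} (hK : K ≠ ⊤) :
    ∃ C : ℝ≥0∞, C ≠ ⊤ ∧ ∀ M : ℝ → ℝ≥0∞, Measurable M →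
      (∀ r ∈ Ioo 0 L, M r ^ (k - 1) ≤ K * ENNReal.ofReal (r ^ e)) →
      ∫⁻ ρ in Ioo 0 L, ENNReal.ofReal (ρ ^ (b - 1)) *
          (∫⁻ r in Ioo ρ L, M r ^ s * ENNReal.ofReal (r ^ (-a)) *
            ENNReal.ofReal (r ^ (-1 : ℝ))) ^ k ≤
        C * ∫⁻ r in Ioo 0 L, M r ^ s * ENNReal.ofReal (r ^ (-d - 1)) := by
  obtain ⟨H, hH, hHardy⟩ := exists_hardy_le hk hb
  have hKs : K ^ s ≠ ⊤ := ENNReal.rpow_ne_top_of_nonneg hs.le hK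
  refine ⟨H * K ^ s, ENNReal.mul_ne_top hH hKs, fun M hM hgrowth => ?_⟩
  refine (hHardy L _ ((hM.pow_const s).mul (by fun_prop))).trans ?_
  rw [mul_assoc, ← lintegral_const_mul' _ _ hKs]
  gcongr H * ?_
  refine setLIntegral_mono' measurableSet_Ioo fun r hr => ?_
  have hpow : (M r ^ s) ^ k = M r ^ s * (M r ^ (k - 1)) ^ s := by
    rw [← ENNReal.rpow_mul, ← ENNReal.rpow_mul,
      ← ENNReal.rpow_add_of_nonneg _ _ hs.le (mul_nonneg (by linarith) hs.le)]
    ring_nf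
  calc (M r ^ s * ENNReal.ofReal (r ^ (-a))) ^ k * ENNReal.ofReal (r ^ (b - 1))
      = M r ^ s * (M r ^ (k - 1)) ^ s * ENNReal.ofReal (r ^ (-a * k + (b - 1))) := by
        rw [ENNReal.mul_rpow_of_nonneg _ _ (by linarith), hpow, ofReal_rpow_rpow hr.1, mul_assoc,
          ofReal_rpow_mul_ofReal_rpow hr.1]
    _ ≤ M r ^ s * (K * ENNReal.ofReal (r ^ e)) ^ s *
        ENNReal.ofReal (r ^ (-a * k + (b - 1))) := by
        gcongr
        exact hgrowth r hr
    _ = K ^ s * (M r ^ s * ENNReal.ofReal (r ^ (-d - 1))) := by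
        rw [ENNReal.mul_rpow_of_nonneg _ _ hs.le, ofReal_rpow_rpow hr.1,
          show -d - 1 = e * s + (-a * k + (b - 1)) by linarith,
          ← ofReal_rpow_mul_ofReal_rpow hr.1 (e * s)]
        ring

/-- Truncated pointwise iterated Wolff potential estimate for a
bounded measure supported in a ball. -/
theorem stmt8 (N : ℕ) (α β p q R : ℝ) (hα : 0 < α) (hp : 1 < p) (hpN : p < (N : ℝ) / α)
    (hβ : 0 < β) (hβN : β < (N : ℝ) / p) (hq : p - 1 < q) (hR : 0 < R) (x0 : Euc N)
    (ω : Measure (Euc N)) [IsFiniteMeasure ω] (hsupp : ω (ball x0 R)ᶜ = 0)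
    (h : ∃ C > 0, ∀ (x : Euc N) (t : ℝ), 0 < t →
      (∫⁻ y, (wolff α p (ENNReal.ofReal (4 * R)) (ω.restrict (ball x t)) y) ^ q) ≤
        ENNReal.ofReal C * ω (ball x t)) :
    ∃ C2 > 0, ∀ᵐ x ∂(volume.restrict (ball x0 (2 * R))),
      wolff β p (ENNReal.ofReal (4 * R))
          (volume.withDensity fun y => (wolff α p (ENNReal.ofReal (4 * R)) ω y) ^ q) x ≤
        ENNReal.ofReal C2 * wolff β p (ENNReal.ofReal (4 * R)) ω x := by
  obtain ⟨C, -, h⟩ := h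
  have hp1 : 0 < p - 1 := by linarith
  have hp0 : 0 < p := by linarith
  have hq0 : 0 < q := by linarith
  have hαp : α * p ≤ N := by rw [lt_div_iff₀ hα] at hpN; linarith
  have hβp : β * p ≤ N := by rw [lt_div_iff₀ hp0] at hβN; exact hβN.le
  have hs : 0 < 1 / (p - 1) := one_div_pos.2 hp1
  have hk : 1 < q * (1 / (p - 1)) := by rw [mul_one_div, one_lt_div hp1]; exact hq
  obtain ⟨K0, hK0, hgrowth0⟩ := exists_measure_ball_rpow_le hp hαp hq ω ENNReal.ofReal_ne_top h
  obtain ⟨K, hK, hgrowth⟩ := exists_measure_ball_two_mul_rpow_le (T := R) (L := 4 * R)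
    (sub_nonneg.2 hk.le) hR ω
    ⟨K0, hK0, fun x t ht htR => hgrowth0 x t ht (by linarith)⟩
  have hmass := fun (x : Euc N) (ρ : ℝ) (hρ : 0 < ρ) =>
    setLIntegral_wolff_rpow_le hp hq0.le ω h x hρ
  obtain ⟨T, hT, htail⟩ := exists_lintegral_tail_le (L := 4 * R)
    (a := ((N : ℝ) - α * p) * (1 / (p - 1))) (b := β * p * (1 / (p - 1)))
    (e := ((N : ℝ) - α * p) * (1 / (p - 1)) * q - N) (d := ((N : ℝ) - β * p) * (1 / (p - 1))) hs hk
    (by positivity) (by ring) hK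
  have hd : 0 ≤ ((N : ℝ) - β * p) * (1 / (p - 1)) := mul_nonneg (by linarith) hs.le
  have hVt : volume (ball (0 : Euc N) 1) ≠ ⊤ := measure_ball_lt_top.ne
  set V := volume (ball (0 : Euc N) 1)
  have hbd : (N : ℝ) * (1 / (p - 1)) + (-(((N : ℝ) - β * p) * (1 / (p - 1))) - 1) =
    β * p * (1 / (p - 1)) - 1 := by ring
  have hdoubling := fun (x : Euc N) (hx : x ∈ ball x0 (2 * R)) =>
    lintegral_measure_ball_two_mul_le hs.le hd hR hsupp hx
  simp_rw [wolff_ofReal_eq (α := β) hp]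
  set s := 1 / (p - 1)
  set a := ((N : ℝ) - α * p) * s
  set d := ((N : ℝ) - β * p) * s
  set A : ℝ≥0∞ := (2 ^ q) ^ s * 2 ^ s with hA
  have hAt : A ≠ ⊤ := by finiteness
  set B : ℝ≥0∞ := A * (ENNReal.ofReal C ^ s + V ^ s * T) * ENNReal.ofReal (5 * 2 ^ d) with hB
  have hCs : ENNReal.ofReal C ^ s ≠ ⊤ := by finiteness
  have hVs : V ^ s ≠ ⊤ := by finiteness
  have hBt : B ≠ ⊤ := by finiteness
  refine ⟨B.toReal + 1, by positivity, ?_⟩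
  filter_upwards [ae_restrict_mem measurableSet_ball] with x hx
  set g : ℝ → ℝ≥0∞ := fun ρ => ∫⁻ r in Ioo ρ (4 * R), ω (ball x (2 * r)) ^ s *
    ENNReal.ofReal (r ^ (-a)) * ENNReal.ofReal (r ^ (-1 : ℝ))
  have hM : Measurable fun r : ℝ => ω (ball x (2 * r)) :=
    (measurable_measure_ball ω x).comp (measurable_const_mul 2)
  have hBle : B ≤ ENNReal.ofReal (B.toReal + 1) := by
    rw [ENNReal.le_ofReal_iff_toReal_le hBt (by positivity)]
    linarith
  refine le_trans ?_ (mul_le_mul_left hBle _)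
  calc _ ≤ ∫⁻ ρ in Ioo 0 (4 * R), A *
        (ENNReal.ofReal C ^ s * (ω (ball x (2 * ρ)) ^ s * ENNReal.ofReal (ρ ^ (-d - 1))) +
          V ^ s * (ENNReal.ofReal (ρ ^ (β * p * s - 1)) * g ρ ^ (q * s))) := by
        refine setLIntegral_mono' measurableSet_Ioo fun ρ hρ => ?_
        rw [withDensity_apply _ measurableSet_ball]
        refine (mul_le_mul_left (ENNReal.rpow_le_rpow (hmass x ρ hρ.1) hs.le) _).trans ?_
        rw [ENNReal.mul_rpow_of_nonneg _ _ hs.le]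
        refine (mul_le_mul_left (mul_le_mul_right (add_rpow_le_two_rpow_mul _ _ hs.le) _) _).trans_eq ?_
        rw [ENNReal.mul_rpow_of_nonneg _ _ hs.le, ENNReal.mul_rpow_of_nonneg _ _ hs.le,
          ENNReal.mul_rpow_of_nonneg _ _ hs.le, ofReal_rpow_rpow hρ.1, ENNReal.rpow_mul (g ρ),
          ← hbd, ← ofReal_rpow_mul_ofReal_rpow hρ.1, hA]
        ring
    _ = A * (ENNReal.ofReal C ^ s *
          (∫⁻ ρ in Ioo 0 (4 * R), ω (ball x (2 * ρ)) ^ s * ENNReal.ofReal (ρ ^ (-d - 1))) +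
          V ^ s * ∫⁻ ρ in Ioo 0 (4 * R),
            ENNReal.ofReal (ρ ^ (β * p * s - 1)) * g ρ ^ (q * s)) := by
        rw [lintegral_const_mul' _ _ hAt, lintegral_add_left, lintegral_const_mul' _ _ hCs,
          lintegral_const_mul' _ _ hVs]
        exact ((hM.pow_const s).mul (by fun_prop)).const_mul _
    _ ≤ A * (ENNReal.ofReal C ^ s *
          (∫⁻ ρ in Ioo 0 (4 * R), ω (ball x (2 * ρ)) ^ s * ENNReal.ofReal (ρ ^ (-d - 1))) +
          V ^ s * (T *
            ∫⁻ ρ in Ioo 0 (4 * R), ω (ball x (2 * ρ)) ^ s * ENNReal.ofReal (ρ ^ (-d - 1)))) := by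
        gcongr A * (_ + V ^ s * ?_)
        exact htail _ hM (hgrowth x)
    _ = A * (ENNReal.ofReal C ^ s + V ^ s * T) *
          ∫⁻ ρ in Ioo 0 (4 * R), ω (ball x (2 * ρ)) ^ s * ENNReal.ofReal (ρ ^ (-d - 1)) := by ring
    _ ≤ _ := by
        rw [hB, mul_assoc _ (ENNReal.ofReal (5 * 2 ^ d))]
        gcongr _ * ?_
        exact hdoubling x hx
end
end

section
/- Let α,β,q1,q2>0 with α>β, 1<p<N/α, q1+q2>p−1, q2<N(p−1)/(N−βp), and (αpq1+βpq2)/(q1+q2)<N. Set γ=(αq1+βq2)/(q1+q2). Then there exist constants, depending only on N,α,β,p,q1,q2, such that for every nonnegative Radon measure μ on ℝ^N the three quantities ∫_{ℝ^N} (M_{γp}[μ](x))^{(q1+q2)/(p−1)} dx, ∫_{ℝ^N} (W_{γ,p}[μ](x))^{q1+q2} dx, and ∫_{ℝ^N} (W_{α,p}[μ](x))^{q1}(W_{β,p}[μ](x))^{q2} dx are pairwise comparable (each is bounded above by a constant times each other). -/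
open MeasureTheory Metric Set Filter Bornology
open scoped ENNReal NNReal Topology RealInnerProductSpace

noncomputable section

/-- The successive differences of a sequence, starting with its first term. -/
def increment (x : ℕ → ℝ≥0∞) : ℕ → ℝ≥0∞
  | 0 => x 0
  | n + 1 => x (n + 1) - x n

lemma sum_increment {x : ℕ → ℝ≥0∞} (hx : Monotone x) (n : ℕ) :
    ∑ m ∈ Finset.range (n + 1), increment x m = x n := by
  induction n with
  | zero => simp [increment]
  | succ n ih =>
    rw [Finset.sum_range_succ, ih, increment, add_tsub_cancel_of_le (hx n.le_succ)]

lemma increment_congr {x y : ℕ → ℝ≥0∞} {n : ℕ} (h : ∀ m ≤ n, x m = y m) :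
    increment x n = increment y n := by
  cases n with
  | zero => exact h 0 le_rfl
  | succ n => simp only [increment, h (n + 1) le_rfl, h n n.le_succ]

lemma measurable_increment {X : Type*} [MeasurableSpace X] {f : ℕ → X → ℝ≥0∞}
    (hf : ∀ n, Measurable (f n)) (n : ℕ) :
    Measurable fun x => increment (fun m => f m x) n := by
  cases n with
  | zero => exact hf 0
  | succ n => exact (hf (n + 1)).sub (hf n)

lemma real_rpow_add_le {x a q θ : ℝ} (hx : 0 ≤ x) (ha : 0 ≤ a) (hθ : 0 < θ) (hθ1 : θ ≤ 1)
    (hq : θ < q) :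
    (x + a) ^ q ≤ x ^ q + max 1 q * (a ^ θ * (x + a) ^ (q - θ)) := by
  rcases (add_nonneg hx ha).eq_or_lt with h0 | hpos
  · have hx0 : x = 0 := by linarith
    have ha0 : a = 0 := by linarith
    subst hx0 ha0
    simp [Real.zero_rpow (hθ.trans hq).ne', Real.zero_rpow hθ.ne']
  set y := x + a with hy
  set t := a / y with ht
  have ht0 : 0 ≤ t := by positivity
  have ht1 : t ≤ 1 := by rw [ht, div_le_one hpos]; linarith
  have hay : a = t * y := by rw [ht]; field_simp
  have hxy : x = (1 - t) * y := by rw [sub_mul, ← hay]; linarith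
  have htθ : t ≤ t ^ θ := by
    simpa using Real.rpow_le_rpow_of_exponent_ge' ht0 ht1 hθ.le hθ1
  have key : 1 ≤ (1 - t) ^ q + max 1 q * t := by
    rcases le_total 1 q with h1 | h1
    · have := one_add_mul_self_le_rpow_one_add (s := -t) (by linarith) h1
      rw [max_eq_right h1]
      rw [← sub_eq_add_neg] at this
      linarith
    · have : (1 - t) ^ (1 : ℝ) ≤ (1 - t) ^ q :=
        Real.rpow_le_rpow_of_exponent_ge' (by linarith) (by linarith) (hθ.trans hq).le h1
      rw [Real.rpow_one] at this
      rw [max_eq_left h1]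
      linarith
  have key2 : 1 ≤ (1 - t) ^ q + max 1 q * t ^ θ := by
    have : max 1 q * t ≤ max 1 q * t ^ θ := by gcongr
    linarith
  have e1 : x ^ q = (1 - t) ^ q * y ^ q := by
    rw [hxy, Real.mul_rpow (by linarith) hpos.le]
  have e2 : a ^ θ * y ^ (q - θ) = t ^ θ * y ^ q := by
    rw [hay, Real.mul_rpow ht0 hpos.le, mul_assoc, ← Real.rpow_add hpos]
    congr 2; ring
  rw [e1, e2]
  have := mul_le_mul_of_nonneg_right key2 (Real.rpow_nonneg hpos.le q)
  linarith

lemma ennreal_rpow_add_le (x a : ℝ≥0∞) {q θ : ℝ} (hθ : 0 < θ) (hθ1 : θ ≤ 1) (hq : θ < q)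
    (hx : x ≠ ⊤) (ha : a ≠ ⊤) :
    (x + a) ^ q ≤ x ^ q + ENNReal.ofReal (max 1 q) * (a ^ θ * (x + a) ^ (q - θ)) := by
  have h := real_rpow_add_le x.toReal_nonneg a.toReal_nonneg hθ hθ1 hq
  have hq0 : 0 ≤ q := (hθ.trans hq).le
  have h' := ENNReal.ofReal_le_ofReal h
  have hs : x.toReal + a.toReal = (x + a).toReal := (ENNReal.toReal_add hx ha).symm
  rw [ENNReal.ofReal_add (by positivity) (by positivity), ENNReal.ofReal_mul (by positivity),
    ENNReal.ofReal_mul (by positivity), hs,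
    ← ENNReal.ofReal_rpow_of_nonneg (by positivity) hq0,
    ← ENNReal.ofReal_rpow_of_nonneg (by positivity) hq0,
    ← ENNReal.ofReal_rpow_of_nonneg (by positivity) hθ.le,
    ← ENNReal.ofReal_rpow_of_nonneg (by positivity) (sub_pos.2 hq).le,
    ENNReal.ofReal_toReal hx, ENNReal.ofReal_toReal ha,
    ENNReal.ofReal_toReal (ENNReal.add_ne_top.2 ⟨hx, ha⟩)] at h'
  exact h'

/-- A sum to the power `q` grows at most like a single term to a small power `θ`. -/
lemma increment_rpow_sum_le (a : ℕ → ℝ≥0∞) (ha : ∀ n, a n ≠ ⊤) {q θ : ℝ} (hθ : 0 < θ)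
    (hθ1 : θ ≤ 1) (hq : θ < q) (n : ℕ) :
    increment (fun n => (∑ m ∈ Finset.range (n + 1), a m) ^ q) n ≤
      ENNReal.ofReal (max 1 q) *
        (a n ^ θ * (∑ m ∈ Finset.range (n + 1), a m) ^ (q - θ)) := by
  cases n with
  | zero =>
    have h1 : (1 : ℝ≥0∞) ≤ ENNReal.ofReal (max 1 q) := by simp
    simp only [increment, zero_add, Finset.sum_range_one]
    rw [← ENNReal.rpow_add_of_nonneg _ _ hθ.le (sub_pos.2 hq).le, add_sub_cancel]
    exact le_mul_of_one_le_left' h1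
  | succ n =>
    simp only [increment]
    rw [Finset.sum_range_succ _ (n + 1)]
    refine tsub_le_iff_left.2 (ennreal_rpow_add_le _ _ hθ hθ1 hq ?_ (ha _))
    exact ENNReal.sum_ne_top.2 fun m _ => ha m

/-- Pointwise dichotomy: either the last term is negligible against the partial sum, or the product
of partial sums is controlled by a single term. -/
lemma sum_increment_mul_le (a b w : ℕ → ℝ≥0∞) (hw : Monotone w) (hb : ∀ n, b n = w n * a n)
    {q1 q2 θ : ℝ} (hθ : 0 < θ) (hq1 : θ < q1) (hq2 : 0 < q2) {ε : ℝ≥0∞} (hε : ε ≠ 0)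
    (hε' : ε ≠ ⊤) (M : ℝ≥0∞) (L : ℕ) (hM : ∀ n ≤ L, a n ^ q1 * b n ^ q2 ≤ M) :
    ∑ n ∈ Finset.range (L + 1), increment (fun n =>
        (∑ m ∈ Finset.range (n + 1), a m) ^ (q1 - θ) *
          (∑ m ∈ Finset.range (n + 1), b m) ^ q2) n * a n ^ θ ≤
      ε ^ θ * ((∑ m ∈ Finset.range (L + 1), a m) ^ q1 *
          (∑ m ∈ Finset.range (L + 1), b m) ^ q2) + (ε⁻¹) ^ (q1 + q2) * M := by
  set A : ℕ → ℝ≥0∞ := fun n => ∑ m ∈ Finset.range (n + 1), a m with hA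
  set B : ℕ → ℝ≥0∞ := fun n => ∑ m ∈ Finset.range (n + 1), b m with hB
  have hAm : Monotone A := fun m n h => Finset.sum_le_sum_of_subset (by simpa using h)
  have hBm : Monotone B := fun m n h => Finset.sum_le_sum_of_subset (by simpa using h)
  set Z : ℕ → ℝ≥0∞ := fun n => A n ^ (q1 - θ) * B n ^ q2 with hZ
  have hZm : Monotone Z := fun m n h => by
    have := hAm h
    have := hBm h
    have : 0 < q1 - θ := sub_pos.2 hq1
    simp only [hZ]
    gcongr
  have hAZ : ∀ n, A n ^ θ * Z n = A n ^ q1 * B n ^ q2 := fun n => by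
    simp only [hZ]
    rw [← mul_assoc, ← ENNReal.rpow_add_of_nonneg _ _ hθ.le (sub_pos.2 hq1).le, add_sub_cancel]
  have haA : ∀ n, a n ≤ A n := fun n =>
    Finset.single_le_sum (f := a) (fun _ _ => zero_le) (by simp)
  change ∑ n ∈ Finset.range (L + 1), increment Z n * a n ^ θ ≤
    ε ^ θ * (A L ^ q1 * B L ^ q2) + (ε⁻¹) ^ (q1 + q2) * M
  have large : ∀ n ≤ L, ε * A n ≤ a n → ∑ m ∈ Finset.range (n + 1), increment Z m * a m ^ θ ≤
      (ε⁻¹) ^ (q1 + q2) * M := fun n hn h => by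
    have h1 : A n ≤ ε⁻¹ * a n := by
      rw [← ENNReal.div_eq_inv_mul]
      exact (ENNReal.le_div_iff_mul_le (Or.inl hε) (Or.inl hε')).2 (by rwa [mul_comm])
    have h2 : B n ≤ ε⁻¹ * b n := by
      calc B n ≤ w n * A n := by
            simp only [hA, hB, Finset.mul_sum]
            refine Finset.sum_le_sum fun m hm => ?_
            rw [hb]
            have := hw (Nat.lt_succ_iff.1 (Finset.mem_range.1 hm))
            gcongr
        _ ≤ w n * (ε⁻¹ * a n) := by gcongr
        _ = ε⁻¹ * b n := by rw [hb]; ring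
    have hq1' : 0 < q1 := hθ.trans hq1
    calc ∑ m ∈ Finset.range (n + 1), increment Z m * a m ^ θ
        ≤ ∑ m ∈ Finset.range (n + 1), increment Z m * A n ^ θ := by
          refine Finset.sum_le_sum fun m hm => ?_
          have := (haA m).trans (hAm (Nat.lt_succ_iff.1 (Finset.mem_range.1 hm)))
          gcongr
      _ = A n ^ q1 * B n ^ q2 := by
          rw [← Finset.sum_mul, sum_increment hZm, mul_comm, hAZ]
      _ ≤ (ε⁻¹ * a n) ^ q1 * (ε⁻¹ * b n) ^ q2 := by gcongr
      _ = (ε⁻¹) ^ (q1 + q2) * (a n ^ q1 * b n ^ q2) := by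
          rw [ENNReal.mul_rpow_of_nonneg _ _ hq1'.le, ENNReal.mul_rpow_of_nonneg _ _ hq2.le,
            ENNReal.rpow_add_of_nonneg _ _ hq1'.le hq2.le]
          ring
      _ ≤ (ε⁻¹) ^ (q1 + q2) * M := by gcongr; exact hM n hn
  have main : ∀ n ≤ L, ∑ m ∈ Finset.range (n + 1), increment Z m * a m ^ θ ≤
      ε ^ θ * (A n ^ q1 * B n ^ q2) + (ε⁻¹) ^ (q1 + q2) * M := by
    intro n
    induction n with
    | zero =>
      intro h0
      rcases le_total (ε * A 0) (a 0) with h | h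
      · exact (large 0 h0 h).trans le_add_self
      · refine le_trans ?_ le_self_add
        simp only [zero_add, Finset.sum_range_one]
        calc increment Z 0 * a 0 ^ θ ≤ Z 0 * (ε * A 0) ^ θ := by
              simp only [increment]; gcongr
          _ = ε ^ θ * (A 0 ^ q1 * B 0 ^ q2) := by
              rw [← hAZ, ENNReal.mul_rpow_of_nonneg _ _ hθ.le]; ring
    | succ n ih =>
      intro hn
      rcases le_total (ε * A (n + 1)) (a (n + 1)) with h | h
      · exact (large _ hn h).trans le_add_self
      · rw [Finset.sum_range_succ]
        have hA' : A n ≤ A (n + 1) := hAm n.le_succ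
        calc _ ≤ ε ^ θ * (A n ^ q1 * B n ^ q2) + (ε⁻¹) ^ (q1 + q2) * M +
              increment Z (n + 1) * (ε * A (n + 1)) ^ θ := by
              gcongr
              exact ih (by omega)
          _ ≤ ε ^ θ * (A (n + 1) ^ θ * Z n) + (ε⁻¹) ^ (q1 + q2) * M +
              increment Z (n + 1) * (ε * A (n + 1)) ^ θ := by
              rw [← hAZ]
              gcongr
          _ = ε ^ θ * (A (n + 1) ^ θ * (Z n + increment Z (n + 1))) +
              (ε⁻¹) ^ (q1 + q2) * M := by
              rw [ENNReal.mul_rpow_of_nonneg _ _ hθ.le]; ring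
          _ = _ := by
              rw [increment, add_tsub_cancel_of_le (hZm n.le_succ), hAZ]
  exact main L le_rfl

lemma ennreal_add_rpow_le (x y : ℝ≥0∞) {q : ℝ} (hq : 0 ≤ q) :
    (x + y) ^ q ≤ 2 ^ q * (x ^ q + y ^ q) := by
  have key : ∀ u v : ℝ≥0∞, u ≤ v → (u + v) ^ q ≤ 2 ^ q * v ^ q := fun u v h => by
    rw [← ENNReal.mul_rpow_of_nonneg _ _ hq, two_mul]
    gcongr
  rcases le_total x y with h | h
  · exact (key x y h).trans (by gcongr; exact le_add_self)
  · rw [add_comm x y]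
    exact (key y x h).trans (by gcongr; exact le_self_add)

/-- The self-improving estimate behind the comparison of a product of potentials with a maximal
function: partial sums `∑ a`, `∑ b` of functions adapted to a refining sequence of partitions
(the fibres of `e n`), for which tails average out to the leading term. -/
theorem lintegral_sum_rpow_mul_le {X ι : Type*} [MeasurableSpace X] (ν : Measure X)
    (e : ℕ → X → ι) (he : ∀ m n, m ≤ n → ∀ x y, e n x = e n y → e m x = e m y)
    (a b : ℕ → X → ℝ≥0∞) (w : ℕ → ℝ≥0∞) (hw : Monotone w) (hb : ∀ n x, b n x = w n * a n x)
    (hae : ∀ n x y, e n x = e n y → a n x = a n y) (ham : ∀ n, Measurable (a n))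
    (hat : ∀ n x, a n x ≠ ⊤)
    {q1 q2 θ : ℝ} (hθ : 0 < θ) (hθ1 : θ ≤ 1) (hq1 : θ < q1) (hq2 : 0 < q2) (K : ℝ≥0∞) (L : ℕ)
    (hKb : ∀ n ≤ L, ∀ d : X → ℝ≥0∞, Measurable d → (∀ x y, e n x = e n y → d x = d y) →
      ∫⁻ x, d x * (∑ m ∈ Finset.Ico n (L + 1), b m x) ^ q2 ∂ν ≤
        K * ∫⁻ x, d x * b n x ^ q2 ∂ν)
    (hKa : ∀ n ≤ L, ∀ d : X → ℝ≥0∞, Measurable d → (∀ x y, e n x = e n y → d x = d y) →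
      ∫⁻ x, d x * ∑ m ∈ Finset.Ico n (L + 1), a m x ^ θ ∂ν ≤
        K * ∫⁻ x, d x * a n x ^ θ ∂ν)
    (M : X → ℝ≥0∞) (hM : ∀ n ≤ L, ∀ x, a n x ^ q1 * b n x ^ q2 ≤ M x)
    {ε : ℝ≥0∞} (hε : ε ≠ 0) (hε' : ε ≠ ⊤) :
    ∫⁻ x, (∑ m ∈ Finset.range (L + 1), a m x) ^ q1 *
        (∑ m ∈ Finset.range (L + 1), b m x) ^ q2 ∂ν ≤
      2 ^ q2 * (1 + K) * ENNReal.ofReal (max 1 q1) * K *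
        (ε ^ θ * ∫⁻ x, (∑ m ∈ Finset.range (L + 1), a m x) ^ q1 *
          (∑ m ∈ Finset.range (L + 1), b m x) ^ q2 ∂ν + (ε⁻¹) ^ (q1 + q2) * ∫⁻ x, M x ∂ν) := by
  have hq1' : 0 < q1 := hθ.trans hq1
  have hq1θ : 0 < q1 - θ := sub_pos.2 hq1
  have hbm : ∀ n, Measurable (b n) := fun n => by
    rw [show b n = fun x => w n * a n x from funext (hb n)]
    exact (ham n).const_mul _
  have hbe : ∀ n x y, e n x = e n y → b n x = b n y := fun n x y h => by
    rw [hb, hb, hae n x y h]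
  set A : ℕ → X → ℝ≥0∞ := fun n x => ∑ m ∈ Finset.range (n + 1), a m x with hA
  set B : ℕ → X → ℝ≥0∞ := fun n x => ∑ m ∈ Finset.range (n + 1), b m x with hB
  have hAM : ∀ n, Measurable (A n) := fun n => Finset.measurable_sum _ fun m _ => ham m
  have hBM : ∀ n, Measurable (B n) := fun n => Finset.measurable_sum _ fun m _ => hbm m
  have hAm : ∀ x, Monotone fun n => A n x := fun x m n h =>
    Finset.sum_le_sum_of_subset (by simpa using h)
  have hBm : ∀ x, Monotone fun n => B n x := fun x m n h =>
    Finset.sum_le_sum_of_subset (by simpa using h)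
  have hAe : ∀ n x y, e n x = e n y → ∀ m ≤ n, A m x = A m y := fun n x y h m hm =>
    Finset.sum_congr rfl fun k hk => hae k x y
      (he k n ((Nat.lt_succ_iff.1 (Finset.mem_range.1 hk)).trans hm) x y h)
  have hBe : ∀ n x y, e n x = e n y → ∀ m ≤ n, B m x = B m y := fun n x y h m hm =>
    Finset.sum_congr rfl fun k hk => hbe k x y
      (he k n ((Nat.lt_succ_iff.1 (Finset.mem_range.1 hk)).trans hm) x y h)
  set dX : ℕ → X → ℝ≥0∞ := fun n x => increment (fun n => A n x ^ q1) n with hdX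
  have hdXM : ∀ n, Measurable (dX n) := measurable_increment fun n => (hAM n).pow_const _
  have hdXe : ∀ n x y, e n x = e n y → dX n x = dX n y := fun n x y h =>
    increment_congr fun m hm => by rw [hAe n x y h m hm]
  set Z : ℕ → X → ℝ≥0∞ := fun n x => A n x ^ (q1 - θ) * B n x ^ q2 with hZ
  have hZM : ∀ n, Measurable (Z n) := fun n => ((hAM n).pow_const _).mul ((hBM n).pow_const _)
  have hZm : ∀ x, Monotone fun n => Z n x := fun x m n h => by
    have := hAm x h
    have := hBm x h
    simp only [hZ]
    gcongr
  set dZ : ℕ → X → ℝ≥0∞ := fun n x => increment (fun n => Z n x) n with hdZ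
  have hdZM : ∀ n, Measurable (dZ n) := measurable_increment hZM
  have hdZe : ∀ n x y, e n x = e n y → dZ n x = dZ n y := fun n x y h =>
    increment_congr fun m hm => by simp only [hZ, hAe n x y h m hm, hBe n x y h m hm]
  change ∫⁻ x, A L x ^ q1 * B L x ^ q2 ∂ν ≤ 2 ^ q2 * (1 + K) * ENNReal.ofReal (max 1 q1) * K *
        (ε ^ θ * ∫⁻ x, A L x ^ q1 * B L x ^ q2 ∂ν + (ε⁻¹) ^ (q1 + q2) * ∫⁻ x, M x ∂ν)
  have hPM : Measurable fun x => A L x ^ q1 * B L x ^ q2 :=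
    ((hAM L).pow_const _).mul ((hBM L).pow_const _)
  -- average the small scales of `B` against the increments of `A ^ q1`
  have average_b : ∫⁻ x, A L x ^ q1 * B L x ^ q2 ∂ν ≤
      2 ^ q2 * (1 + K) * ∑ n ∈ Finset.range (L + 1), ∫⁻ x, dX n x * B n x ^ q2 ∂ν := by
    have hpt : ∀ x, A L x ^ q1 * B L x ^ q2 ≤ ∑ n ∈ Finset.range (L + 1),
        (2 ^ q2 * (dX n x * B n x ^ q2) +
          2 ^ q2 * (dX n x * (∑ m ∈ Finset.Ico n (L + 1), b m x) ^ q2)) := fun x => by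
      have hX : A L x ^ q1 = ∑ n ∈ Finset.range (L + 1), dX n x :=
        (sum_increment (x := fun n => A n x ^ q1) (fun m n h => by
          have := hAm x h
          simp only
          gcongr) L).symm
      rw [hX, Finset.sum_mul]
      refine Finset.sum_le_sum fun n hn => ?_
      have hn' : n ≤ L := Nat.lt_succ_iff.1 (Finset.mem_range.1 hn)
      have hBL : B L x ≤ B n x + ∑ m ∈ Finset.Ico n (L + 1), b m x := by
        simp only [hB]
        rw [← Finset.sum_range_add_sum_Ico (fun m => b m x) (show n ≤ L + 1 by omega)]
        gcongr
        exact n.le_succ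
      calc dX n x * B L x ^ q2
          ≤ dX n x * (B n x + ∑ m ∈ Finset.Ico n (L + 1), b m x) ^ q2 := by gcongr
        _ ≤ dX n x * (2 ^ q2 * (B n x ^ q2 + (∑ m ∈ Finset.Ico n (L + 1), b m x) ^ q2)) := by
            gcongr
            exact ennreal_add_rpow_le _ _ hq2.le
        _ = _ := by ring
    refine (lintegral_mono hpt).trans ?_
    have hm1 : ∀ n, Measurable fun x => dX n x * B n x ^ q2 := fun n =>
      (hdXM n).mul ((hBM n).pow_const _)
    have hm2 : ∀ n, Measurable fun x => dX n x * (∑ m ∈ Finset.Ico n (L + 1), b m x) ^ q2 :=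
      fun n => (hdXM n).mul ((Finset.measurable_sum _ fun m _ => hbm m).pow_const _)
    rw [lintegral_finsetSum]
    swap
    · exact fun n _ => ((hm1 n).const_mul _).add ((hm2 n).const_mul _)
    rw [Finset.mul_sum]
    refine Finset.sum_le_sum fun n hn => ?_
    have hn' : n ≤ L := Nat.lt_succ_iff.1 (Finset.mem_range.1 hn)
    rw [lintegral_add_left ((hm1 n).const_mul _), lintegral_const_mul _ (hm1 n),
      lintegral_const_mul _ (hm2 n)]
    calc _ ≤ 2 ^ q2 * ∫⁻ x, dX n x * B n x ^ q2 ∂ν +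
          2 ^ q2 * (K * ∫⁻ x, dX n x * b n x ^ q2 ∂ν) := by
          gcongr
          exact hKb n hn' _ (hdXM n) (hdXe n)
      _ ≤ 2 ^ q2 * ∫⁻ x, dX n x * B n x ^ q2 ∂ν +
          2 ^ q2 * (K * ∫⁻ x, dX n x * B n x ^ q2 ∂ν) := by
          gcongr with x
          exact Finset.single_le_sum (f := fun m => b m x) (fun _ _ => zero_le) (by simp)
      _ = _ := by ring
  have bound_increment : ∑ n ∈ Finset.range (L + 1), ∫⁻ x, dX n x * B n x ^ q2 ∂ν ≤
      ENNReal.ofReal (max 1 q1) *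
        ∫⁻ x, ∑ n ∈ Finset.range (L + 1), a n x ^ θ * Z n x ∂ν := by
    have hm : ∀ n, Measurable fun x => a n x ^ θ * Z n x := fun n =>
      ((ham n).pow_const _).mul (hZM n)
    rw [lintegral_finsetSum _ fun n _ => hm n, Finset.mul_sum]
    refine Finset.sum_le_sum fun n _ => ?_
    rw [← lintegral_const_mul _ (hm n)]
    refine lintegral_mono fun x => ?_
    calc dX n x * B n x ^ q2
        ≤ ENNReal.ofReal (max 1 q1) * (a n x ^ θ * A n x ^ (q1 - θ)) * B n x ^ q2 := by
          gcongr
          exact increment_rpow_sum_le (fun m => a m x) (fun m => hat m x) hθ hθ1 hq1 n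
      _ = _ := by simp only [hZ]; ring
  -- average the small scales of `a ^ θ` against the increments of `Z`
  have average_a : ∫⁻ x, ∑ n ∈ Finset.range (L + 1), a n x ^ θ * Z n x ∂ν ≤
      K * ∫⁻ x, ∑ n ∈ Finset.range (L + 1), dZ n x * a n x ^ θ ∂ν := by
    have hpt : ∀ x, ∑ n ∈ Finset.range (L + 1), a n x ^ θ * Z n x =
        ∑ m ∈ Finset.range (L + 1), dZ m x * ∑ n ∈ Finset.Ico m (L + 1), a n x ^ θ := fun x => by
      calc ∑ n ∈ Finset.range (L + 1), a n x ^ θ * Z n x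
          = ∑ n ∈ Finset.range (L + 1), ∑ m ∈ Finset.range (n + 1), dZ m x * a n x ^ θ := by
            refine Finset.sum_congr rfl fun n _ => ?_
            rw [← Finset.sum_mul, sum_increment (hZm x), mul_comm]
        _ = ∑ m ∈ Finset.range (L + 1), ∑ n ∈ Finset.Ico m (L + 1), dZ m x * a n x ^ θ :=
            Finset.sum_comm' (by
              intro n m
              simp only [Finset.mem_range, Finset.mem_Ico]
              omega)
        _ = _ := by simp only [Finset.mul_sum]
    simp_rw [hpt]
    rw [lintegral_finsetSum, lintegral_finsetSum, Finset.mul_sum]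
    rotate_left
    · exact fun m _ => (hdZM m).mul ((ham m).pow_const _)
    · exact fun m _ => (hdZM m).mul (Finset.measurable_sum _ fun n _ => (ham n).pow_const _)
    exact Finset.sum_le_sum fun n hn =>
      hKa n (Nat.lt_succ_iff.1 (Finset.mem_range.1 hn)) _ (hdZM n) (hdZe n)
  have bound_terms : ∫⁻ x, ∑ n ∈ Finset.range (L + 1), dZ n x * a n x ^ θ ∂ν ≤
      ε ^ θ * ∫⁻ x, A L x ^ q1 * B L x ^ q2 ∂ν + (ε⁻¹) ^ (q1 + q2) * ∫⁻ x, M x ∂ν := by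
    rw [← lintegral_const_mul _ hPM,
      ← lintegral_const_mul' ((ε⁻¹) ^ (q1 + q2)) M
        (ENNReal.rpow_ne_top_of_nonneg (by positivity) (ENNReal.inv_ne_top.2 hε)),
      ← lintegral_add_left (hPM.const_mul _)]
    exact lintegral_mono fun x => sum_increment_mul_le (fun m => a m x) (fun m => b m x) w hw
      (fun n => hb n x) hθ hq1 hq2 hε hε' (M x) L fun n hn => hM n hn x
  calc _ ≤ 2 ^ q2 * (1 + K) * (ENNReal.ofReal (max 1 q1) * (K * (ε ^ θ *
        ∫⁻ x, A L x ^ q1 * B L x ^ q2 ∂ν + (ε⁻¹) ^ (q1 + q2) * ∫⁻ x, M x ∂ν))) := by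
        refine average_b.trans ?_
        gcongr
        refine bound_increment.trans ?_
        gcongr
        refine average_a.trans ?_
        gcongr
    _ = _ := by ring

/-- Absorption of a small multiple of a finite quantity. -/
lemma ennreal_absorb {θ : ℝ} (hθ : 0 < θ) {C : ℝ≥0∞} (hC : C ≠ ⊤) (q : ℝ) (hq : 0 ≤ q) :
    ∃ C' : ℝ≥0∞, C' ≠ ⊤ ∧ ∀ P m : ℝ≥0∞, P ≠ ⊤ →
      (∀ ε : ℝ≥0∞, ε ≠ 0 → ε ≠ ⊤ → P ≤ C * (ε ^ θ * P + (ε⁻¹) ^ q * m)) → P ≤ C' * m := by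
  set c : ℝ≥0∞ := 2 * (C + 1) with hc
  have hc0 : c ≠ 0 := by simp [hc]
  have hct : c ≠ ⊤ := by finiteness
  set ε : ℝ≥0∞ := (c⁻¹) ^ (1 / θ) with hε
  have hε0 : ε ≠ 0 := by
    have : c⁻¹ ≠ 0 := ENNReal.inv_ne_zero.2 hct
    simp [hε, ENNReal.rpow_eq_zero_iff, hct, hθ.le]
  have hεt : ε ≠ ⊤ :=
    ENNReal.rpow_ne_top_of_nonneg (by positivity) (ENNReal.inv_ne_top.2 hc0)
  have hεθ : ε ^ θ = c⁻¹ := by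
    rw [hε, ← ENNReal.rpow_mul, one_div_mul_cancel hθ.ne', ENNReal.rpow_one]
  have hεq : (ε⁻¹) ^ q ≠ ⊤ := ENNReal.rpow_ne_top_of_nonneg hq (ENNReal.inv_ne_top.2 hε0)
  refine ⟨2 * (C * (ε⁻¹) ^ q), by finiteness, fun P m hP h => ?_⟩
  have h1 := h ε hε0 hεt
  rw [hεθ, mul_add, ← mul_assoc] at h1
  have h2 : C * c⁻¹ ≤ 2⁻¹ := by
    rw [hc, ENNReal.mul_inv (by simp) (by simp), mul_left_comm]
    calc (2 : ℝ≥0∞)⁻¹ * (C * (C + 1)⁻¹) ≤ 2⁻¹ * ((C + 1) * (C + 1)⁻¹) := by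
          gcongr; exact le_self_add
      _ = 2⁻¹ := by rw [ENNReal.mul_inv_cancel (by simp) (by finiteness), mul_one]
  have h3 : P ≤ 2⁻¹ * P + C * ((ε⁻¹) ^ q * m) := h1.trans (by gcongr)
  have h4 : 2 * P ≤ P + 2 * (C * ((ε⁻¹) ^ q * m)) := by
    calc 2 * P ≤ 2 * (2⁻¹ * P + C * ((ε⁻¹) ^ q * m)) := by gcongr
      _ = _ := by
        rw [mul_add, ← mul_assoc, ENNReal.mul_inv_cancel (by simp) (by simp), one_mul]
  rw [two_mul] at h4
  have h5 := (ENNReal.add_le_add_iff_left hP).1 h4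
  refine h5.trans_eq ?_
  ring

/-- The index of the dyadic cube of side `2 ^ k` containing `x`. -/
def gridIdx {N : ℕ} (k : ℤ) (x : Euc N) : Fin N → ℤ := fun i => ⌊x i / (2 : ℝ) ^ k⌋

/-- The union of the dyadic cube of side `2 ^ k` containing `x` and of its neighbours. -/
def gridNbhd {N : ℕ} (k : ℤ) (x : Euc N) : Set (Euc N) :=
  {y | ∀ i, |gridIdx k y i - gridIdx k x i| ≤ 1}

/-- The mass of the neighbourhood `gridNbhd k x`. -/
def gridMass {N : ℕ} (μ : Measure (Euc N)) (k : ℤ) (x : Euc N) : ℝ≥0∞ := μ (gridNbhd k x)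

lemma gridIdx_succ {N : ℕ} (k : ℤ) (x : Euc N) (i : Fin N) :
    gridIdx (k + 1) x i = gridIdx k x i / 2 := by
  simp only [gridIdx]
  rw [zpow_add_one₀ two_ne_zero, ← div_div]
  exact_mod_cast Int.floor_div_natCast (x i / (2 : ℝ) ^ k) 2

lemma gridIdx_eq_of_le {N : ℕ} {j k : ℤ} (h : j ≤ k) {x y : Euc N}
    (hxy : gridIdx j x = gridIdx j y) : gridIdx k x = gridIdx k y := by
  induction k, h using Int.leInduction with
  | base => exact hxy
  | succ k _ ih =>
    funext i
    rw [gridIdx_succ, gridIdx_succ, ih]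

lemma gridNbhd_mono {N : ℕ} {j k : ℤ} (h : j ≤ k) (x : Euc N) :
    gridNbhd j x ⊆ gridNbhd k x := by
  induction k, h using Int.leInduction with
  | base => exact subset_rfl
  | succ k _ ih =>
    refine ih.trans fun y hy i => ?_
    have := hy i
    rw [gridIdx_succ, gridIdx_succ]
    rw [abs_le] at this ⊢
    omega

lemma gridNbhd_congr {N : ℕ} {k : ℤ} {x y : Euc N} (h : gridIdx k x = gridIdx k y) :
    gridNbhd k x = gridNbhd k y := by
  simp only [gridNbhd, h]

lemma mem_gridNbhd_comm {N : ℕ} {k : ℤ} {x y : Euc N} :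
    y ∈ gridNbhd k x ↔ x ∈ gridNbhd k y := by
  simp only [gridNbhd, mem_ofPred_eq, abs_sub_comm]

lemma measurable_gridIdx {N : ℕ} (k : ℤ) : Measurable (gridIdx (N := N) k) := by
  refine measurable_pi_lambda _ fun i => Int.measurable_floor.comp ?_
  fun_prop

lemma measurable_of_gridIdx {N : ℕ} {k : ℤ} {d : Euc N → ℝ≥0∞}
    (hd : ∀ x y, gridIdx k x = gridIdx k y → d x = d y) : Measurable d := by
  have hd' : Function.FactorsThrough d (gridIdx k) := fun x y h => hd x y h
  rw [← hd'.extend_comp (fun _ => (0 : ℝ≥0∞))]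
  exact (measurable_of_countable _).comp (measurable_gridIdx k)

lemma ball_subset_gridNbhd {N : ℕ} (k : ℤ) (x : Euc N) :
    ball x ((2 : ℝ) ^ k) ⊆ gridNbhd k x := by
  intro y hy i
  have h2 : (0 : ℝ) < (2 : ℝ) ^ k := by positivity
  have h1 : |y i - x i| < (2 : ℝ) ^ k := by
    refine lt_of_le_of_lt ?_ (mem_ball_iff_norm.1 hy)
    simpa using PiLp.norm_apply_le (y - x) i
  have h3 : |y i / (2 : ℝ) ^ k - x i / (2 : ℝ) ^ k| < 1 := by
    rw [← sub_div, abs_div, abs_of_pos h2, div_lt_one h2]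
    exact h1
  simp only [gridIdx]
  rw [abs_lt] at h3
  have a1 := Int.floor_le (y i / (2 : ℝ) ^ k)
  have a2 := Int.lt_floor_add_one (y i / (2 : ℝ) ^ k)
  have a3 := Int.floor_le (x i / (2 : ℝ) ^ k)
  have a4 := Int.lt_floor_add_one (x i / (2 : ℝ) ^ k)
  rw [abs_le]
  constructor
  · have : (⌊x i / (2 : ℝ) ^ k⌋ : ℝ) < ⌊y i / (2 : ℝ) ^ k⌋ + 2 := by linarith
    have : ⌊x i / (2 : ℝ) ^ k⌋ < ⌊y i / (2 : ℝ) ^ k⌋ + 2 := by exact_mod_cast this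
    omega
  · have : (⌊y i / (2 : ℝ) ^ k⌋ : ℝ) < ⌊x i / (2 : ℝ) ^ k⌋ + 2 := by linarith
    have : ⌊y i / (2 : ℝ) ^ k⌋ < ⌊x i / (2 : ℝ) ^ k⌋ + 2 := by exact_mod_cast this
    omega

lemma gridNbhd_subset_ball {N : ℕ} (k : ℤ) (x : Euc N) :
    gridNbhd k x ⊆ ball x ((2 * N + 1) * (2 : ℝ) ^ k) := by
  intro y hy
  have h2 : (0 : ℝ) < (2 : ℝ) ^ k := by positivity
  have hi : ∀ i, |(y - x) i| ≤ 2 * (2 : ℝ) ^ k := fun i => by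
    have h := hy i
    simp only [gridIdx] at h
    have a1 := Int.floor_le (y i / (2 : ℝ) ^ k)
    have a2 := Int.lt_floor_add_one (y i / (2 : ℝ) ^ k)
    have a3 := Int.floor_le (x i / (2 : ℝ) ^ k)
    have a4 := Int.lt_floor_add_one (x i / (2 : ℝ) ^ k)
    have h' : |(⌊y i / (2 : ℝ) ^ k⌋ : ℝ) - ⌊x i / (2 : ℝ) ^ k⌋| ≤ 1 := by exact_mod_cast h
    rw [abs_le] at h'
    have h3 : |y i / (2 : ℝ) ^ k - x i / (2 : ℝ) ^ k| ≤ 2 := by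
      rw [abs_le]
      constructor <;> linarith [h'.1, h'.2]
    rw [← sub_div, abs_div, abs_of_pos h2, div_le_iff₀ h2] at h3
    simpa using h3
  rw [mem_ball_iff_norm]
  calc ‖y - x‖ ≤ ∑ i, |(y - x) i| := by
        rw [EuclideanSpace.norm_eq]
        refine Real.sqrt_le_iff.2 ⟨by positivity, ?_⟩
        simpa using Finset.sum_sq_le_sq_sum_of_nonneg (s := Finset.univ)
          (f := fun i => |(y - x) i|) (fun i _ => abs_nonneg _)
    _ ≤ ∑ _i : Fin N, 2 * (2 : ℝ) ^ k := Finset.sum_le_sum fun i _ => hi i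
    _ = 2 * N * (2 : ℝ) ^ k := by simp; ring
    _ < (2 * N + 1) * (2 : ℝ) ^ k := by nlinarith

lemma gridMass_congr {N : ℕ} (μ : Measure (Euc N)) {k : ℤ} {x y : Euc N}
    (h : gridIdx k x = gridIdx k y) : gridMass μ k x = gridMass μ k y := by
  rw [gridMass, gridMass, gridNbhd_congr h]

lemma gridMass_mono {N : ℕ} (μ : Measure (Euc N)) {j k : ℤ} (h : j ≤ k) (x : Euc N) :
    gridMass μ j x ≤ gridMass μ k x :=
  measure_mono (gridNbhd_mono h x)

lemma gridMass_ne_top {N : ℕ} (μ : Measure (Euc N)) [IsLocallyFiniteMeasure μ] (k : ℤ)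
    (x : Euc N) : gridMass μ k x ≠ ⊤ :=
  ((measure_mono (gridNbhd_subset_ball k x)).trans_lt measure_ball_lt_top).ne

lemma measurable_gridMass {N : ℕ} (μ : Measure (Euc N)) (k : ℤ) : Measurable (gridMass μ k) :=
  measurable_of_gridIdx fun _ _ h => gridMass_congr μ h

lemma measurableSet_gridIdx_fiber {N : ℕ} (k : ℤ) (z : Fin N → ℤ) :
    MeasurableSet (gridIdx k ⁻¹' {z}) :=
  measurable_gridIdx k (measurableSet_singleton z)

lemma ball_subset_gridIdx_fiber {N : ℕ} (k : ℤ) (z : Fin N → ℤ) :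
    ball (WithLp.toLp 2 fun i => ((z i : ℝ) + 1 / 2) * (2 : ℝ) ^ k : Euc N)
      (1 / 2 * (2 : ℝ) ^ k) ⊆ gridIdx k ⁻¹' {z} := by
  intro y hy
  have h2 : (0 : ℝ) < (2 : ℝ) ^ k := by positivity
  refine mem_preimage.2 (mem_singleton_iff.2 (funext fun i => ?_))
  have h1 : |y i - ((z i : ℝ) + 1 / 2) * (2 : ℝ) ^ k| < 1 / 2 * (2 : ℝ) ^ k := by
    refine lt_of_le_of_lt ?_ (mem_ball_iff_norm.1 hy)
    simpa using PiLp.norm_apply_le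
      (y - (WithLp.toLp 2 fun i => ((z i : ℝ) + 1 / 2) * (2 : ℝ) ^ k : Euc N)) i
  rw [abs_lt] at h1
  simp only [gridIdx]
  rw [Int.floor_eq_iff, le_div_iff₀ h2, div_lt_iff₀ h2]
  constructor <;> nlinarith [h1.1, h1.2]

lemma measurableSet_mem_gridNbhd {N : ℕ} (k : ℤ) :
    MeasurableSet {q : Euc N × Euc N | q.2 ∈ gridNbhd k q.1} := by
  have hf : Measurable fun q : Euc N × Euc N => (gridIdx k q.1, gridIdx k q.2) :=
    ((measurable_gridIdx k).comp measurable_fst).prodMk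
      ((measurable_gridIdx k).comp measurable_snd)
  have hs : MeasurableSet {r : (Fin N → ℤ) × (Fin N → ℤ) | ∀ i, |r.2 i - r.1 i| ≤ 1} :=
    (Set.to_countable _).measurableSet
  exact hf hs

lemma measurableSet_gridNbhd {N : ℕ} (k : ℤ) (x : Euc N) : MeasurableSet (gridNbhd k x) := by
  have hs : MeasurableSet {r : Fin N → ℤ | ∀ i, |r i - gridIdx k x i| ≤ 1} :=
    (Set.to_countable _).measurableSet
  exact measurable_gridIdx k hs

/-- Sums of the masses of small neighbourhoods inside a larger cube are controlled by the mass of the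
larger neighbourhood. -/
lemma setLIntegral_gridMass_le {N : ℕ} (μ : Measure (Euc N)) [IsLocallyFiniteMeasure μ] {j k : ℤ}
    (h : j ≤ k) (z : Fin N → ℤ) (x₀ : Euc N) (hx₀ : gridIdx k x₀ = z) :
    ∫⁻ x in gridIdx k ⁻¹' {z}, gridMass μ j x ≤
      ENNReal.ofReal (((2 * N + 1) * (2 : ℝ) ^ j) ^ N) * volume (ball (0 : Euc N) 1) *
        gridMass μ k x₀ := by
  have hmeas := measurableSet_mem_gridNbhd (N := N) j
  have hone : ∀ x, gridMass μ j x =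
      ∫⁻ y, {q : Euc N × Euc N | q.2 ∈ gridNbhd j q.1}.indicator 1 (x, y) ∂μ := fun x => by
    have : (fun y => {q : Euc N × Euc N | q.2 ∈ gridNbhd j q.1}.indicator
        (1 : Euc N × Euc N → ℝ≥0∞) (x, y)) = (gridNbhd j x).indicator 1 := rfl
    rw [this, lintegral_indicator_one]
    · rfl
    · exact measurableSet_gridNbhd j x
  simp_rw [hone]
  rw [lintegral_lintegral_swap]
  swap
  · exact (measurable_one.indicator hmeas).aemeasurable
  calc _ ≤ ∫⁻ y, (gridNbhd k x₀).indicator (fun _ =>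
        ENNReal.ofReal (((2 * N + 1) * (2 : ℝ) ^ j) ^ N) * volume (ball (0 : Euc N) 1)) y ∂μ := by
        refine lintegral_mono fun y => ?_
        by_cases hy : y ∈ gridNbhd k x₀
        · rw [indicator_of_mem hy]
          have : (fun x => {q : Euc N × Euc N | q.2 ∈ gridNbhd j q.1}.indicator
              (1 : Euc N × Euc N → ℝ≥0∞) (x, y)) = (gridNbhd j y).indicator 1 := by
            funext x
            classical
            simp only [indicator_apply, mem_ofPred_eq, Pi.one_apply]
            exact if_congr mem_gridNbhd_comm rfl rfl
          simp only [this]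
          calc _ ≤ ∫⁻ x, (gridNbhd j y).indicator 1 x := setLIntegral_le_lintegral _ _
            _ ≤ volume (gridNbhd j y) := lintegral_indicator_one_le _
            _ ≤ volume (ball y ((2 * N + 1) * (2 : ℝ) ^ j)) :=
                measure_mono (gridNbhd_subset_ball j y)
            _ = _ := by
                rw [Measure.addHaar_ball_of_pos _ _ (by positivity), finrank_euclideanSpace_fin]
        · rw [indicator_of_notMem hy]
          refine (setLIntegral_congr_fun (measurableSet_gridIdx_fiber k z)
            (g := fun _ => 0) fun x hx => ?_).trans_le (by simp)
          refine indicator_of_notMem (fun hxy => hy ?_) _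
          rw [gridNbhd_congr (hx₀.trans (show gridIdx k x = z from hx).symm)]
          exact gridNbhd_mono h x hxy
    _ = _ := by
        rw [lintegral_indicator_const (measurableSet_gridNbhd k x₀)]
        rfl

lemma lintegral_eq_tsum_gridIdx {N : ℕ} (k : ℤ) (f : Euc N → ℝ≥0∞) :
    ∫⁻ x, f x = ∑' z : Fin N → ℤ, ∫⁻ x in gridIdx k ⁻¹' {z}, f x := by
  rw [← lintegral_iUnion (measurableSet_gridIdx_fiber k)
    (fun z z' hzz => Disjoint.preimage _ (disjoint_singleton.2 hzz)) f]
  rw [← preimage_iUnion, iUnion_of_singleton, preimage_univ, setLIntegral_univ]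

lemma two_rpow_mul_natCast (j k : ℤ) (N : ℕ) :
    (2 : ℝ≥0∞) ^ (((j : ℝ) - k) * N) = ENNReal.ofReal (((2 : ℝ) ^ j / (2 : ℝ) ^ k) ^ N) := by
  rw [← ENNReal.ofReal_ofNat 2, ENNReal.ofReal_rpow_of_pos two_pos,
    Real.rpow_mul two_pos.le, Real.rpow_natCast, Real.rpow_sub two_pos, Real.rpow_intCast,
    Real.rpow_intCast]

lemma lintegral_mul_gridMass_le (N : ℕ) :
    ∃ K : ℝ≥0∞, K ≠ ⊤ ∧ ∀ (μ : Measure (Euc N)) [IsLocallyFiniteMeasure μ] (j k : ℤ), j ≤ k →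
      ∀ d : Euc N → ℝ≥0∞, (∀ x y, gridIdx k x = gridIdx k y → d x = d y) →
        ∫⁻ x, d x * gridMass μ j x ≤
          K * 2 ^ (((j : ℝ) - k) * N) * ∫⁻ x, d x * gridMass μ k x := by
  refine ⟨ENNReal.ofReal ((2 * (2 * N + 1)) ^ N), ENNReal.ofReal_ne_top,
    fun μ _ j k h d hd => ?_⟩
  rw [lintegral_eq_tsum_gridIdx k, lintegral_eq_tsum_gridIdx k, ← ENNReal.tsum_mul_left]
  refine ENNReal.tsum_le_tsum fun z => ?_
  set c : Euc N := WithLp.toLp 2 fun i => ((z i : ℝ) + 1 / 2) * (2 : ℝ) ^ k with hc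
  have hball := ball_subset_gridIdx_fiber k z
  rw [← hc] at hball
  have hcz : gridIdx k c = z := hball (mem_ball_self (by positivity))
  have hfib : ∀ x ∈ gridIdx k ⁻¹' {z}, gridIdx k x = gridIdx k c := fun x hx => by
    rw [hcz]; exact hx
  have e1 : ∫⁻ x in gridIdx k ⁻¹' {z}, d x * gridMass μ j x =
      d c * ∫⁻ x in gridIdx k ⁻¹' {z}, gridMass μ j x := by
    rw [← lintegral_const_mul _ (measurable_gridMass μ j)]
    refine setLIntegral_congr_fun (measurableSet_gridIdx_fiber k z) fun x hx => ?_
    simp only [hd x c (hfib x hx)]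
  have e2 : ∫⁻ x in gridIdx k ⁻¹' {z}, d x * gridMass μ k x =
      d c * gridMass μ k c * volume (gridIdx k ⁻¹' {z}) := by
    rw [← setLIntegral_const]
    refine setLIntegral_congr_fun (measurableSet_gridIdx_fiber k z) fun x hx => ?_
    simp only [hd x c (hfib x hx), gridMass_congr μ (hfib x hx)]
  have e3 : ENNReal.ofReal ((1 / 2 * (2 : ℝ) ^ k) ^ N) * volume (ball (0 : Euc N) 1) ≤
      volume (gridIdx k ⁻¹' {z}) := by
    refine le_trans (le_of_eq ?_) (measure_mono hball)
    rw [Measure.addHaar_ball_of_pos volume c (r := 1 / 2 * (2 : ℝ) ^ k) (by positivity),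
      finrank_euclideanSpace_fin]
  have e4 : ENNReal.ofReal (((2 * N + 1) * (2 : ℝ) ^ j) ^ N) =
      ENNReal.ofReal ((2 * (2 * N + 1)) ^ N) * 2 ^ (((j : ℝ) - k) * N) *
        ENNReal.ofReal ((1 / 2 * (2 : ℝ) ^ k) ^ N) := by
    rw [two_rpow_mul_natCast, ← ENNReal.ofReal_mul (by positivity),
      ← ENNReal.ofReal_mul (by positivity), ← mul_pow, ← mul_pow]
    congr 2
    field_simp
  rw [e1, e2]
  calc d c * ∫⁻ x in gridIdx k ⁻¹' {z}, gridMass μ j x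
      ≤ d c * (ENNReal.ofReal (((2 * N + 1) * (2 : ℝ) ^ j) ^ N) * volume (ball (0 : Euc N) 1) *
          gridMass μ k c) := by
        gcongr
        exact setLIntegral_gridMass_le μ h z c hcz
    _ = ENNReal.ofReal ((2 * (2 * N + 1)) ^ N) * 2 ^ (((j : ℝ) - k) * N) *
          (d c * gridMass μ k c * (ENNReal.ofReal ((1 / 2 * (2 : ℝ) ^ k) ^ N) *
            volume (ball (0 : Euc N) 1))) := by
        rw [e4]; ring
    _ ≤ _ := by gcongr

lemma ennreal_rpow_le_mul_add {t : ℝ} (ht : 0 < t) (ht1 : t ≤ 1) (x y : ℝ≥0∞) (hx : x ≠ ⊤) :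
    x ^ t ≤ x * y ^ (t - 1) + y ^ t := by
  rcases le_or_gt x y with h | h
  · exact (ENNReal.rpow_le_rpow h ht.le).trans le_add_self
  · refine le_trans ?_ le_self_add
    have hx0 : x ≠ 0 := (zero_le.trans_lt h).ne'
    calc x ^ t = x * x ^ (t - 1) := by
          nth_rewrite 2 [← ENNReal.rpow_one x]
          rw [← ENNReal.rpow_add _ _ hx0 hx, add_sub_cancel]
      _ ≤ x * y ^ (t - 1) := by
          rw [show t - 1 = -(1 - t) by ring, ENNReal.rpow_neg, ENNReal.rpow_neg]
          have : 0 ≤ 1 - t := by linarith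
          gcongr

lemma ennreal_rpow_sub_one_mul_le (t : ℝ) (y : ℝ≥0∞) (hy : y ≠ ⊤) : y ^ (t - 1) * y ≤ y ^ t := by
  rcases eq_or_ne y 0 with rfl | h0
  · simp
  · nth_rewrite 2 [← ENNReal.rpow_one y]
    rw [← ENNReal.rpow_add _ _ h0 hy, sub_add_cancel]

lemma lintegral_mul_gridMass_rpow_le (N : ℕ) {t : ℝ} (ht : 0 < t) :
    ∃ K : ℝ≥0∞, K ≠ ⊤ ∧ ∀ (μ : Measure (Euc N)) [IsLocallyFiniteMeasure μ] (j k : ℤ), j ≤ k →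
      ∀ d : Euc N → ℝ≥0∞, (∀ x y, gridIdx k x = gridIdx k y → d x = d y) →
        ∫⁻ x, d x * gridMass μ j x ^ t ≤
          K * 2 ^ (((j : ℝ) - k) * (N * min 1 t)) * ∫⁻ x, d x * gridMass μ k x ^ t := by
  obtain ⟨K, hK, H⟩ := lintegral_mul_gridMass_le N
  rcases le_total 1 t with h1 | h1
  · refine ⟨K, hK, fun μ _ j k h d hd => ?_⟩
    have ht1 : 0 ≤ t - 1 := by linarith
    have split : ∀ y : ℝ≥0∞, y ^ t = y ^ (t - 1) * y := fun y => by
      nth_rewrite 3 [← ENNReal.rpow_one y]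
      rw [← ENNReal.rpow_add_of_nonneg _ _ ht1 zero_le_one, sub_add_cancel]
    rw [min_eq_left h1, mul_one]
    calc ∫⁻ x, d x * gridMass μ j x ^ t
        ≤ ∫⁻ x, (d x * gridMass μ k x ^ (t - 1)) * gridMass μ j x := by
          refine lintegral_mono fun x => ?_
          rw [split, ← mul_assoc]
          have := gridMass_mono μ h x
          gcongr
      _ ≤ K * 2 ^ (((j : ℝ) - k) * N) *
          ∫⁻ x, (d x * gridMass μ k x ^ (t - 1)) * gridMass μ k x :=
          H μ j k h _ fun x y hxy => by rw [hd x y hxy, gridMass_congr μ hxy]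
      _ = _ := by simp_rw [split (gridMass μ k _), mul_assoc]
  · refine ⟨K + 1, by finiteness, fun μ _ j k h d hd => ?_⟩
    rw [min_eq_right h1]
    set lam : ℝ≥0∞ := 2 ^ (((j : ℝ) - k) * N) with hlam
    have hlamt : lam ≠ ⊤ := by
      rw [hlam, two_rpow_mul_natCast]; exact ENNReal.ofReal_ne_top
    have hlam' : (2 : ℝ≥0∞) ^ (((j : ℝ) - k) * (N * t)) = lam ^ t := by
      rw [hlam, ← ENNReal.rpow_mul]; ring_nf
    have hFt : ∀ x, lam * gridMass μ k x ≠ ⊤ := fun x =>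
      ENNReal.mul_ne_top hlamt (gridMass_ne_top μ k x)
    have hdm : Measurable d := measurable_of_gridIdx hd
    have hFm := measurable_gridMass μ k
    have hJm := measurable_gridMass μ j
    rw [hlam']
    calc ∫⁻ x, d x * gridMass μ j x ^ t
        ≤ ∫⁻ x, (d x * (lam * gridMass μ k x) ^ (t - 1)) * gridMass μ j x +
            d x * (lam * gridMass μ k x) ^ t := by
          refine lintegral_mono fun x => ?_
          calc d x * gridMass μ j x ^ t ≤ d x * (gridMass μ j x *
                (lam * gridMass μ k x) ^ (t - 1) + (lam * gridMass μ k x) ^ t) := by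
                gcongr
                exact ennreal_rpow_le_mul_add ht h1 _ _ (gridMass_ne_top μ j x)
            _ = _ := by ring
      _ = (∫⁻ x, (d x * (lam * gridMass μ k x) ^ (t - 1)) * gridMass μ j x) +
            ∫⁻ x, d x * (lam * gridMass μ k x) ^ t := by
          rw [lintegral_add_left (by fun_prop)]
      _ ≤ (K * lam * ∫⁻ x, (d x * (lam * gridMass μ k x) ^ (t - 1)) * gridMass μ k x) +
            ∫⁻ x, d x * (lam * gridMass μ k x) ^ t := by
          gcongr
          exact H μ j k h _ fun x y hxy => by rw [hd x y hxy, gridMass_congr μ hxy]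
      _ = (K * ∫⁻ x, d x * ((lam * gridMass μ k x) ^ (t - 1) * (lam * gridMass μ k x))) +
            ∫⁻ x, d x * (lam * gridMass μ k x) ^ t := by
          rw [mul_assoc, ← lintegral_const_mul _ (by fun_prop)]
          congr 3
          funext x
          ring
      _ ≤ (K * ∫⁻ x, d x * (lam * gridMass μ k x) ^ t) +
            ∫⁻ x, d x * (lam * gridMass μ k x) ^ t := by
          gcongr with x
          exact ennreal_rpow_sub_one_mul_le t _ (hFt x)
      _ = (K + 1) * ∫⁻ x, lam ^ t * (d x * gridMass μ k x ^ t) := by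
          rw [add_mul, one_mul]
          simp_rw [ENNReal.mul_rpow_of_nonneg _ _ ht.le, mul_left_comm]
      _ = _ := by
          rw [lintegral_const_mul _ (by fun_prop)]; ring

lemma tsum_two_rpow_neg_ne_top {δ : ℝ} (hδ : 0 < δ) :
    ∑' i : ℕ, (2 : ℝ≥0∞) ^ (-((i : ℝ) * δ)) ≠ ⊤ := by
  have h : ∀ i : ℕ, (2 : ℝ≥0∞) ^ (-((i : ℝ) * δ)) = ((2 : ℝ≥0∞) ^ (-δ)) ^ i := fun i => by
    rw [← ENNReal.rpow_natCast, ← ENNReal.rpow_mul]; ring_nf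
  simp_rw [h]
  rw [ENNReal.tsum_geometric]
  refine ENNReal.inv_ne_top.2 (tsub_pos_of_lt ?_).ne'
  exact ENNReal.rpow_lt_one_of_one_lt_of_neg (by norm_num) (by linarith)

lemma sum_Ico_two_rpow_le (δ : ℝ) (n L : ℕ) :
    ∑ m ∈ Finset.Ico n L, (2 : ℝ≥0∞) ^ (-(((m : ℝ) - n) * δ)) ≤
      ∑' i : ℕ, (2 : ℝ≥0∞) ^ (-((i : ℝ) * δ)) := by
  rw [Finset.sum_Ico_eq_sum_range]
  simp only [Nat.cast_add, add_sub_cancel_left]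
  exact ENNReal.sum_le_tsum _

/-- A sum raised to the power `r`, with geometric weights. -/
lemma rpow_sum_Ico_le {r δ : ℝ} (hr : 0 < r) (c : ℕ → ℝ≥0∞) (n L : ℕ) :
    (∑ m ∈ Finset.Ico n L, c m) ^ r ≤ (∑' i : ℕ, (2 : ℝ≥0∞) ^ (-((i : ℝ) * (δ / r)))) ^ r *
      ∑ m ∈ Finset.Ico n L, 2 ^ (((m : ℝ) - n) * δ) * c m ^ r := by
  set S := ∑ m ∈ Finset.Ico n L, (2 : ℝ≥0∞) ^ (((m : ℝ) - n) * δ) * c m ^ r with hS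
  have hc : ∀ m ∈ Finset.Ico n L, c m ≤ 2 ^ (-(((m : ℝ) - n) * (δ / r))) * S ^ (1 / r) := by
    intro m hm
    have h1 : 2 ^ (((m : ℝ) - n) * δ) * c m ^ r ≤ S :=
      Finset.single_le_sum (f := fun m : ℕ => (2 : ℝ≥0∞) ^ (((m : ℝ) - n) * δ) * c m ^ r)
        (fun _ _ => zero_le) hm
    calc c m = 2 ^ (-(((m : ℝ) - n) * (δ / r))) *
          (2 ^ (((m : ℝ) - n) * δ) * c m ^ r) ^ (1 / r) := by
          rw [ENNReal.mul_rpow_of_nonneg _ _ (by positivity), ← ENNReal.rpow_mul,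
            ← ENNReal.rpow_mul, mul_one_div_cancel hr.ne', ENNReal.rpow_one, ← mul_assoc,
            ← ENNReal.rpow_add _ _ (by simp) (by simp)]
          rw [show -(((m : ℝ) - n) * (δ / r)) + ((m : ℝ) - n) * δ * (1 / r) = 0 by ring,
            ENNReal.rpow_zero, one_mul]
      _ ≤ _ := by gcongr
  calc (∑ m ∈ Finset.Ico n L, c m) ^ r
      ≤ ((∑' i : ℕ, (2 : ℝ≥0∞) ^ (-((i : ℝ) * (δ / r)))) * S ^ (1 / r)) ^ r := by
        gcongr
        refine (Finset.sum_le_sum hc).trans ?_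
        rw [← Finset.sum_mul]
        gcongr
        exact sum_Ico_two_rpow_le _ n L
    _ = _ := by
        rw [ENNReal.mul_rpow_of_nonneg _ _ hr.le, ← ENNReal.rpow_mul, one_div_mul_cancel hr.ne',
          ENNReal.rpow_one]

/-- The contribution of the scale `2 ^ k` to a discretized potential. -/
def gridTerm {N : ℕ} (μ : Measure (Euc N)) (s E : ℝ) (k : ℤ) (x : Euc N) : ℝ≥0∞ :=
  gridMass μ k x ^ s * 2 ^ (-((k : ℝ) * E))

lemma measurable_gridTerm {N : ℕ} (μ : Measure (Euc N)) (s E : ℝ) (k : ℤ) :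
    Measurable (gridTerm μ s E k) :=
  ((measurable_gridMass μ k).pow_const _).mul_const _

lemma gridTerm_rpow {N : ℕ} (μ : Measure (Euc N)) (s E : ℝ) (k : ℤ) (x : Euc N) {r : ℝ}
    (hr : 0 ≤ r) : gridTerm μ s E k x ^ r = gridTerm μ (s * r) (E * r) k x := by
  rw [gridTerm, gridTerm, ENNReal.mul_rpow_of_nonneg _ _ hr, ← ENNReal.rpow_mul,
    ← ENNReal.rpow_mul]
  ring_nf

/-- The small scales of a discretized potential average out to the leading term. -/
lemma lintegral_mul_sum_gridTerm_rpow_le (N : ℕ) {s E r : ℝ} (hs : 0 < s) (hr : 0 < r)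
    (h1 : E * r < N) (h2 : E < N * s) :
    ∃ K : ℝ≥0∞, K ≠ ⊤ ∧ ∀ (μ : Measure (Euc N)) [IsLocallyFiniteMeasure μ] (k : ℤ) (L n : ℕ),
      ∀ d : Euc N → ℝ≥0∞, (∀ x y, gridIdx (k - n) x = gridIdx (k - n) y → d x = d y) →
        ∫⁻ x, d x * (∑ m ∈ Finset.Ico n L, gridTerm μ s E (k - m) x) ^ r ≤
          K * ∫⁻ x, d x * gridTerm μ s E (k - n) x ^ r := by
  obtain ⟨K, hK, H⟩ := lintegral_mul_gridMass_rpow_le N (mul_pos hs hr)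
  set δ : ℝ := (N * min 1 (s * r) - E * r) / 2 with hδ
  have hδ0 : 0 < δ := by
    have : E * r < N * min 1 (s * r) := by
      rcases le_total 1 (s * r) with h | h
      · rwa [min_eq_left h, mul_one]
      · rw [min_eq_right h, ← mul_assoc]
        exact mul_lt_mul_of_pos_right h2 hr
    rw [hδ]; linarith
  set G := ∑' i : ℕ, (2 : ℝ≥0∞) ^ (-((i : ℝ) * (δ / r))) with hG
  set G' := ∑' i : ℕ, (2 : ℝ≥0∞) ^ (-((i : ℝ) * δ)) with hG'
  have hGt : G ^ r ≠ ⊤ :=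
    ENNReal.rpow_ne_top_of_nonneg hr.le (tsum_two_rpow_neg_ne_top (by positivity))
  have hGt' : G' ≠ ⊤ := tsum_two_rpow_neg_ne_top hδ0
  refine ⟨G ^ r * (K * G'), by finiteness, fun μ _ k L n d hd => ?_⟩
  have hdm : Measurable d := measurable_of_gridIdx hd
  have hterm : ∀ m, n ≤ m → ∫⁻ x, d x * gridTerm μ s E (k - m) x ^ r ≤
      K * 2 ^ (-(((m : ℝ) - n) * (2 * δ))) * ∫⁻ x, d x * gridTerm μ s E (k - n) x ^ r := by
    intro m hm
    have hpull : ∀ m : ℕ, ∫⁻ x, d x * gridTerm μ s E (k - m) x ^ r =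
        2 ^ (-(((k - m : ℤ) : ℝ) * (E * r))) *
          ∫⁻ x, d x * gridMass μ (k - m) x ^ (s * r) := fun m => by
      have := measurable_gridMass μ (k - m)
      rw [← lintegral_const_mul _ (by fun_prop)]
      congr 1
      funext x
      rw [gridTerm_rpow _ _ _ _ _ hr.le, gridTerm]
      ring
    rw [hpull, hpull]
    calc _ ≤ 2 ^ (-(((k - m : ℤ) : ℝ) * (E * r))) *
          (K * 2 ^ ((((k - m : ℤ) : ℝ) - (k - n : ℤ)) * (N * min 1 (s * r))) *
            ∫⁻ x, d x * gridMass μ (k - n) x ^ (s * r)) := by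
          gcongr
          exact H μ (k - m) (k - n) (by omega) d hd
      _ = _ := by
          have e : (2 : ℝ≥0∞) ^ (-(((k - m : ℤ) : ℝ) * (E * r))) *
              2 ^ ((((k - m : ℤ) : ℝ) - (k - n : ℤ)) * (N * min 1 (s * r))) =
              2 ^ (-(((m : ℝ) - n) * (2 * δ))) * 2 ^ (-(((k - n : ℤ) : ℝ) * (E * r))) := by
            rw [← ENNReal.rpow_add _ _ (by simp) (by simp),
              ← ENNReal.rpow_add _ _ (by simp) (by simp)]
            congr 1
            rw [hδ]
            push_cast
            ring
          rw [mul_assoc K, mul_left_comm, ← mul_assoc (2 ^ _) (2 ^ _), e]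
          ring
  have hm : ∀ m : ℕ, Measurable fun x => d x * gridTerm μ s E (k - m) x ^ r := fun m =>
    hdm.mul ((measurable_gridTerm μ s E _).pow_const _)
  calc ∫⁻ x, d x * (∑ m ∈ Finset.Ico n L, gridTerm μ s E (k - m) x) ^ r
      ≤ ∫⁻ x, G ^ r * ∑ m ∈ Finset.Ico n L,
          2 ^ (((m : ℝ) - n) * δ) * (d x * gridTerm μ s E (k - m) x ^ r) := by
        refine lintegral_mono fun x => ?_
        calc _ ≤ d x * (G ^ r * ∑ m ∈ Finset.Ico n L,
              2 ^ (((m : ℝ) - n) * δ) * gridTerm μ s E (k - m) x ^ r) := by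
              gcongr
              exact rpow_sum_Ico_le hr _ n L
          _ = _ := by
              rw [mul_left_comm, Finset.mul_sum]
              simp_rw [mul_left_comm (d x)]
    _ = G ^ r * ∑ m ∈ Finset.Ico n L,
          2 ^ (((m : ℝ) - n) * δ) * ∫⁻ x, d x * gridTerm μ s E (k - m) x ^ r := by
        rw [lintegral_const_mul' _ _ hGt, lintegral_finsetSum]
        · congr 1
          exact Finset.sum_congr rfl fun m _ => lintegral_const_mul _ (hm m)
        · exact fun m _ => (hm m).const_mul _
    _ ≤ G ^ r * ∑ m ∈ Finset.Ico n L, 2 ^ (-(((m : ℝ) - n) * δ)) *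
          (K * ∫⁻ x, d x * gridTerm μ s E (k - n) x ^ r) := by
        refine mul_le_mul' le_rfl (Finset.sum_le_sum fun m hmem => ?_)
        calc _ ≤ 2 ^ (((m : ℝ) - n) * δ) * (K * 2 ^ (-(((m : ℝ) - n) * (2 * δ))) *
              ∫⁻ x, d x * gridTerm μ s E (k - n) x ^ r) := by
              gcongr
              exact hterm m (Finset.mem_Ico.1 hmem).1
          _ = _ := by
              have e : (2 : ℝ≥0∞) ^ (((m : ℝ) - n) * δ) * 2 ^ (-(((m : ℝ) - n) * (2 * δ))) =
                  2 ^ (-(((m : ℝ) - n) * δ)) := by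
                rw [← ENNReal.rpow_add _ _ (by simp) (by simp)]
                congr 1
                ring
              rw [mul_assoc K, mul_left_comm, ← mul_assoc (2 ^ _) (2 ^ _), e]
              ring
    _ ≤ _ := by
        rw [← Finset.sum_mul, mul_assoc (G ^ r), mul_comm K G', mul_assoc G']
        gcongr
        exact sum_Ico_two_rpow_le δ n L

lemma gridTerm_ne_top {N : ℕ} (μ : Measure (Euc N)) [IsLocallyFiniteMeasure μ] {s : ℝ} (hs : 0 ≤ s)
    (E : ℝ) (k : ℤ) (x : Euc N) : gridTerm μ s E k x ≠ ⊤ :=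
  ENNReal.mul_ne_top (ENNReal.rpow_ne_top_of_nonneg hs (gridMass_ne_top μ k x)) (by simp)

lemma gridTerm_le {N : ℕ} (μ : Measure (Euc N)) {s : ℝ} (hs : 0 ≤ s) (E : ℝ) {j k : ℤ}
    (h : j ≤ k) (x : Euc N) :
    gridTerm μ s E j x ≤ 2 ^ (((k : ℝ) - j) * E) * gridTerm μ s E k x := by
  have e : (2 : ℝ≥0∞) ^ (((k : ℝ) - j) * E) * 2 ^ (-((k : ℝ) * E)) = 2 ^ (-((j : ℝ) * E)) := by
    rw [← ENNReal.rpow_add _ _ (by simp) (by simp)]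
    ring_nf
  rw [gridTerm, gridTerm, mul_left_comm, e]
  gcongr
  exact gridMass_mono μ h x

/-- A finite discretized potential is dominated by its largest scale. -/
lemma sum_gridTerm_le {N : ℕ} {s : ℝ} (hs : 0 ≤ s) (E : ℝ) (L : ℕ) :
    ∃ C : ℝ≥0∞, C ≠ ⊤ ∧ ∀ (μ : Measure (Euc N)) (k : ℤ) (x : Euc N),
      ∑ n ∈ Finset.range (L + 1), gridTerm μ s E (k - n) x ≤ C * gridTerm μ s E k x := by
  refine ⟨∑ n ∈ Finset.range (L + 1), 2 ^ ((n : ℝ) * E),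
    ENNReal.sum_ne_top.2 fun n _ => by simp, fun μ k x => ?_⟩
  rw [Finset.sum_mul]
  refine Finset.sum_le_sum fun n _ => ?_
  refine (gridTerm_le μ hs E (by omega : k - n ≤ k) x).trans_eq ?_
  push_cast
  ring_nf

/-- The integral of a product of powers of discretized potentials is controlled by any common
majorant of the products of the individual terms. -/
theorem lintegral_sum_gridTerm_mul_le (N : ℕ) {s A B q1 q2 : ℝ} (hs : 0 < s)
    (hAB : A ≤ B) (hB : B < N * s) (hq1 : 0 < q1) (hq2 : 0 < q2) (hBq : B * q2 < N) :
    ∃ C : ℝ≥0∞, C ≠ ⊤ ∧ ∀ (μ : Measure (Euc N)) [IsLocallyFiniteMeasure μ] (k : ℤ) (L : ℕ)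
      (M : Euc N → ℝ≥0∞),
      (∀ n : ℕ, ∀ x, gridTerm μ s A (k - n) x ^ q1 * gridTerm μ s B (k - n) x ^ q2 ≤ M x) →
        ∫⁻ x, (∑ n ∈ Finset.range (L + 1), gridTerm μ s A (k - n) x) ^ q1 *
          (∑ n ∈ Finset.range (L + 1), gridTerm μ s B (k - n) x) ^ q2 ≤ C * ∫⁻ x, M x := by
  set θ : ℝ := min 1 (min (q1 / 2) (1 / s)) with hθ
  have hθ0 : 0 < θ := lt_min one_pos (lt_min (by positivity) (by positivity))
  have hθ1 : θ ≤ 1 := min_le_left _ _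
  have hθq : θ < q1 := ((min_le_right _ _).trans (min_le_left _ _)).trans_lt (by linarith)
  have hθs : s * θ ≤ 1 := by
    have : θ ≤ 1 / s := (min_le_right _ _).trans (min_le_right _ _)
    rwa [le_div_iff₀ hs, mul_comm] at this
  have hA2 : A * θ < N * (s * θ) := by
    rw [← mul_assoc]
    exact mul_lt_mul_of_pos_right (hAB.trans_lt hB) hθ0
  have hA1 : A * θ * 1 < N := by
    rw [mul_one]
    refine hA2.trans_le ?_
    have : (0 : ℝ) ≤ N := N.cast_nonneg
    nlinarith
  obtain ⟨K₁, hK₁, H₁⟩ := lintegral_mul_sum_gridTerm_rpow_le N hs hq2 hBq hB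
  obtain ⟨K₂, hK₂, H₂⟩ :=
    lintegral_mul_sum_gridTerm_rpow_le N (mul_pos hs hθ0) one_pos hA1 hA2
  set K := K₁ + K₂ with hK
  have hKt : 2 ^ q2 * (1 + K) * ENNReal.ofReal (max 1 q1) * K ≠ ⊤ := by finiteness
  obtain ⟨C, hC, H⟩ := ennreal_absorb hθ0 hKt (q1 + q2) (by positivity)
  refine ⟨C + 1, by finiteness, fun μ _ k L M hM => ?_⟩
  rcases eq_or_ne (∫⁻ x, M x) ⊤ with hMt | hMt
  · rw [hMt, ENNReal.mul_top (by simp)]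
    exact le_top
  refine (H _ _ ?_ fun ε hε hε' => ?_).trans (by gcongr; exact le_self_add)
  · obtain ⟨CA, hCA, HA⟩ := sum_gridTerm_le (N := N) hs.le A L
    obtain ⟨CB, hCB, HB⟩ := sum_gridTerm_le (N := N) hs.le B L
    refine ne_top_of_le_ne_top (b := CA ^ q1 * CB ^ q2 * ∫⁻ x, M x) ?_ ?_
    · finiteness
    rw [← lintegral_const_mul' _ _ (by finiteness)]
    refine lintegral_mono fun x => ?_
    have h0 := hM 0 x
    simp only [Nat.cast_zero, sub_zero] at h0
    calc _ ≤ (CA * gridTerm μ s A k x) ^ q1 * (CB * gridTerm μ s B k x) ^ q2 := by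
          have h1 := HA μ k x
          have h2 := HB μ k x
          gcongr
      _ = CA ^ q1 * CB ^ q2 * (gridTerm μ s A k x ^ q1 * gridTerm μ s B k x ^ q2) := by
          rw [ENNReal.mul_rpow_of_nonneg _ _ hq1.le, ENNReal.mul_rpow_of_nonneg _ _ hq2.le]
          ring
      _ ≤ _ := by gcongr
  · refine lintegral_sum_rpow_mul_le volume (fun n : ℕ => gridIdx (k - n))
      (fun m n h x y hxy => gridIdx_eq_of_le (by omega) hxy)
      (fun n : ℕ => gridTerm μ s A (k - n)) (fun n : ℕ => gridTerm μ s B (k - n))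
      (fun n => 2 ^ (-(((k : ℝ) - n) * (B - A)))) (fun m n h => ?_) (fun n x => ?_)
      (fun n x y hxy => ?_) (fun n => measurable_gridTerm μ s A _)
      (fun n x => gridTerm_ne_top μ hs.le A _ x) hθ0 hθ1 hθq hq2 K L ?_ ?_ M
      (fun n _ x => hM n x) hε hε'
    · refine ENNReal.rpow_le_rpow_of_exponent_le (by norm_num) ?_
      have : (m : ℝ) ≤ n := by exact_mod_cast h
      nlinarith
    · simp only [gridTerm]
      rw [mul_left_comm, ← ENNReal.rpow_add _ _ (by simp) (by simp)]
      congr 2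
      push_cast
      ring
    · simp only [gridTerm, gridMass_congr μ hxy]
    · intro n _ d _ hd
      refine (H₁ μ k (L + 1) n d hd).trans ?_
      gcongr
      exact le_self_add
    · intro n _ d _ hd
      have := H₂ μ k (L + 1) n d hd
      simp only [ENNReal.rpow_one] at this
      simp only [gridTerm_rpow μ s A _ _ hθ0.le]
      refine this.trans ?_
      gcongr
      exact le_add_self

/-- The fractional weights may be pulled out of a power. -/
lemma div_ofReal_rpow {t : ℝ} (ht : 0 < t) (m : ℝ≥0∞) (D : ℝ) {r : ℝ} (hr : 0 ≤ r) :
    (m / ENNReal.ofReal (t ^ D)) ^ r = m ^ r * ENNReal.ofReal (t ^ (-(D * r))) := by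
  rw [div_eq_mul_inv, ENNReal.mul_rpow_of_nonneg _ _ hr,
    ← ENNReal.ofReal_inv_of_pos (Real.rpow_pos_of_pos ht _), ← Real.rpow_neg ht.le,
    ENNReal.ofReal_rpow_of_pos (Real.rpow_pos_of_pos ht _), ← Real.rpow_mul ht.le, neg_mul]

lemma two_rpow_neg_eq_ofReal (k : ℤ) (E : ℝ) :
    (2 : ℝ≥0∞) ^ (-((k : ℝ) * E)) = ENNReal.ofReal (((2 : ℝ) ^ k) ^ (-E)) := by
  rw [← ENNReal.ofReal_ofNat 2, ENNReal.ofReal_rpow_of_pos two_pos, ← Real.rpow_intCast,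
    ← Real.rpow_mul two_pos.le, mul_neg]

lemma setOf_wolff_top : {ρ : ℝ | 0 < ρ ∧ ENNReal.ofReal ρ < ⊤} = Ioi 0 := by
  ext ρ
  simp

/-- A Wolff potential is dominated by its discretization. -/
lemma wolff_le_tsum_gridTerm {N : ℕ} {α p : ℝ} (hp : 1 < p) (hα : 0 ≤ N - α * p)
    (μ : Measure (Euc N)) (x : Euc N) :
    wolff α p ⊤ μ x ≤ 2 ^ (((N : ℝ) - α * p) * (1 / (p - 1))) *
      ∑' k : ℤ, gridTerm μ (1 / (p - 1)) (((N : ℝ) - α * p) * (1 / (p - 1))) k x := by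
  set s : ℝ := 1 / (p - 1) with hs
  set D : ℝ := N - α * p with hD
  have hs0 : 0 ≤ s := by rw [hs]; exact one_div_nonneg.2 (by linarith)
  have hcover : Ioi (0 : ℝ) ⊆ ⋃ k : ℤ, Ico ((2 : ℝ) ^ k) ((2 : ℝ) ^ (k + 1)) := fun ρ hρ =>
    mem_iUnion.2 (exists_mem_Ico_zpow hρ one_lt_two)
  rw [wolff, setOf_wolff_top, ← (Equiv.addRight (1 : ℤ)).tsum_eq, ← ENNReal.tsum_mul_left]
  refine (lintegral_mono_set hcover).trans ((lintegral_iUnion_le _ _).trans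
    (ENNReal.tsum_le_tsum fun k => ?_))
  have hk : (0 : ℝ) < (2 : ℝ) ^ k := by positivity
  have hk' : (2 : ℝ) ^ (k + 1) - (2 : ℝ) ^ k = (2 : ℝ) ^ k := by
    rw [zpow_add_one₀ two_ne_zero]; ring
  calc ∫⁻ ρ in Ico ((2 : ℝ) ^ k) ((2 : ℝ) ^ (k + 1)),
        (μ (ball x ρ) / ENNReal.ofReal (ρ ^ D)) ^ s / ENNReal.ofReal ρ
      ≤ ∫⁻ _ in Ico ((2 : ℝ) ^ k) ((2 : ℝ) ^ (k + 1)),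
        (gridMass μ (k + 1) x / ENNReal.ofReal (((2 : ℝ) ^ k) ^ D)) ^ s /
          ENNReal.ofReal ((2 : ℝ) ^ k) := by
        refine setLIntegral_mono measurable_const fun ρ hρ => ?_
        have h1 : μ (ball x ρ) ≤ gridMass μ (k + 1) x :=
          measure_mono ((ball_subset_ball hρ.2.le).trans (ball_subset_gridNbhd (k + 1) x))
        have h2 := hρ.1
        gcongr
    _ = (gridMass μ (k + 1) x / ENNReal.ofReal (((2 : ℝ) ^ k) ^ D)) ^ s := by
        rw [setLIntegral_const, Real.volume_Ico, hk',
          ENNReal.div_mul_cancel (by simpa using hk) ENNReal.ofReal_ne_top]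
    _ = _ := by
        rw [div_ofReal_rpow hk _ _ hs0, ← two_rpow_neg_eq_ofReal, Equiv.coe_addRight, gridTerm,
          mul_left_comm (2 ^ (D * s)), ← ENNReal.rpow_add _ _ (by simp) (by simp)]
        congr 2
        push_cast
        ring

lemma div_rpow_le_wolff {N : ℕ} {α p : ℝ} (hp : 1 < p) (hα : 0 ≤ N - α * p)
    (μ : Measure (Euc N)) (x : Euc N) {t : ℝ} (ht : 0 < t) :
    (μ (ball x t) / ENNReal.ofReal (t ^ ((N : ℝ) - α * p))) ^ (1 / (p - 1)) ≤
      2 ^ (((N : ℝ) - α * p) * (1 / (p - 1)) + 1) * wolff α p ⊤ μ x := by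
  set s : ℝ := 1 / (p - 1) with hs
  set D : ℝ := N - α * p with hD
  have hs0 : 0 ≤ s := by rw [hs]; exact one_div_nonneg.2 (by linarith)
  have h2t : 0 < 2 * t := by positivity
  have key : (μ (ball x t) / ENNReal.ofReal ((2 * t) ^ D)) ^ s / 2 ≤ wolff α p ⊤ μ x := by
    calc (μ (ball x t) / ENNReal.ofReal ((2 * t) ^ D)) ^ s / 2
        = ∫⁻ _ in Ico t (2 * t),
          (μ (ball x t) / ENNReal.ofReal ((2 * t) ^ D)) ^ s / ENNReal.ofReal (2 * t) := by
          rw [setLIntegral_const, Real.volume_Ico, show 2 * t - t = t by ring,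
            ENNReal.ofReal_mul two_pos.le, ENNReal.ofReal_ofNat, div_eq_mul_inv _ (2 : ℝ≥0∞),
            div_eq_mul_inv _ (2 * _), ENNReal.mul_inv (by simp) (by simp), mul_assoc, mul_assoc,
            ENNReal.inv_mul_cancel (by simpa using ht) ENNReal.ofReal_ne_top, mul_one]
      _ ≤ ∫⁻ ρ in Ico t (2 * t),
          (μ (ball x ρ) / ENNReal.ofReal (ρ ^ D)) ^ s / ENNReal.ofReal ρ := by
          refine setLIntegral_mono' measurableSet_Ico fun ρ hρ => ?_
          have h1 := hρ.1
          have h2 := hρ.2.le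
          have h3 : 0 < ρ := ht.trans_le h1
          gcongr
      _ ≤ wolff α p ⊤ μ x := by
          rw [wolff, setOf_wolff_top]
          exact lintegral_mono_set fun ρ hρ => ht.trans_le hρ.1
  refine le_trans (le_of_eq ?_) (mul_le_mul_right key _)
  rw [div_ofReal_rpow ht _ _ hs0, div_ofReal_rpow h2t _ _ hs0, Real.mul_rpow two_pos.le ht.le,
    ENNReal.ofReal_mul (by positivity), ← ENNReal.ofReal_rpow_of_pos two_pos, ENNReal.ofReal_ofNat,
    ENNReal.rpow_add _ _ (by simp) (by simp), ENNReal.rpow_one, ENNReal.rpow_neg]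
  have e1 : (2 : ℝ≥0∞) ^ (D * s) * (2 ^ (D * s))⁻¹ = 1 :=
    ENNReal.mul_inv_cancel (by simp) (by simp)
  have e2 : (2 : ℝ≥0∞) * 2⁻¹ = 1 := ENNReal.mul_inv_cancel (by simp) (by simp)
  symm
  calc _ = (μ (ball x t) ^ s * ENNReal.ofReal (t ^ (-(D * s)))) *
        (2 ^ (D * s) * (2 ^ (D * s))⁻¹) * ((2 : ℝ≥0∞) * 2⁻¹) := by
        rw [div_eq_mul_inv]; ring
    _ = _ := by rw [e1, e2, mul_one, mul_one]

/-- The fractional maximal function of intermediate order is dominated by a product of Wolff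
potentials. -/
lemma fracMax_rpow_le (N : ℕ) {α β g p q1 q2 : ℝ} (hp : 1 < p) (hα : 0 ≤ N - α * p)
    (hβ : 0 ≤ N - β * p) (hq1 : 0 < q1) (hq2 : 0 < q2)
    (hg : (q1 + q2) * g = (α * q1 + β * q2) * p) :
    ∃ C : ℝ≥0∞, C ≠ ⊤ ∧ ∀ (μ : Measure (Euc N)) (x : Euc N),
      fracMax g ⊤ μ x ^ ((q1 + q2) / (p - 1)) ≤
        C * (wolff α p ⊤ μ x ^ q1 * wolff β p ⊤ μ x ^ q2) := by
  set s : ℝ := 1 / (p - 1) with hs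
  have hs0 : 0 < s := one_div_pos.2 (by linarith)
  have hqs : (q1 + q2) / (p - 1) = (q1 + q2) * s := by rw [hs]; ring
  have hqs0 : 0 < (q1 + q2) * s := by positivity
  refine ⟨(2 ^ ((N - α * p) * s + 1)) ^ q1 * (2 ^ ((N - β * p) * s + 1)) ^ q2,
    ENNReal.mul_ne_top (ENNReal.rpow_ne_top_of_nonneg hq1.le (by simp))
      (ENNReal.rpow_ne_top_of_nonneg hq2.le (by simp)), fun μ x => ?_⟩
  rw [hqs, ← ENNReal.le_rpow_inv_iff hqs0]
  refine iSup₂_le fun t ht => iSup_le fun _ => ?_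
  rw [ENNReal.le_rpow_inv_iff hqs0]
  have h1 := div_rpow_le_wolff hp hα μ x ht
  have h2 := div_rpow_le_wolff hp hβ μ x ht
  rw [← hs] at h1 h2
  calc (μ (ball x t) / ENNReal.ofReal (t ^ ((N : ℝ) - g))) ^ ((q1 + q2) * s)
      = ((μ (ball x t) / ENNReal.ofReal (t ^ ((N : ℝ) - α * p))) ^ s) ^ q1 *
        ((μ (ball x t) / ENNReal.ofReal (t ^ ((N : ℝ) - β * p))) ^ s) ^ q2 := by
        rw [← ENNReal.rpow_mul, ← ENNReal.rpow_mul, div_ofReal_rpow ht _ _ hqs0.le,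
          div_ofReal_rpow ht _ _ (by positivity), div_ofReal_rpow ht _ _ (by positivity),
          mul_mul_mul_comm, ← ENNReal.rpow_add_of_nonneg _ _ (by positivity) (by positivity),
          ← ENNReal.ofReal_mul (by positivity), ← Real.rpow_add ht]
        congr 2
        · ring
        · congr 1
          linear_combination s * hg
    _ ≤ (2 ^ ((N - α * p) * s + 1) * wolff α p ⊤ μ x) ^ q1 *
        (2 ^ ((N - β * p) * s + 1) * wolff β p ⊤ μ x) ^ q2 := by gcongr
    _ = _ := by
        rw [ENNReal.mul_rpow_of_nonneg _ _ hq1.le, ENNReal.mul_rpow_of_nonneg _ _ hq2.le]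
        ring

lemma gridTerm_mul_le_fracMax {N : ℕ} {α β g p q1 q2 : ℝ} (hp : 1 < p) (hq1 : 0 < q1)
    (hq2 : 0 < q2) (hg : (q1 + q2) * g = (α * q1 + β * q2) * p) (μ : Measure (Euc N)) (k : ℤ)
    (x : Euc N) :
    gridTerm μ (1 / (p - 1)) ((N - α * p) * (1 / (p - 1))) k x ^ q1 *
        gridTerm μ (1 / (p - 1)) ((N - β * p) * (1 / (p - 1))) k x ^ q2 ≤
      ENNReal.ofReal ((2 * N + 1) ^ ((N - g) * ((q1 + q2) / (p - 1)))) *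
        fracMax g ⊤ μ x ^ ((q1 + q2) / (p - 1)) := by
  set s : ℝ := 1 / (p - 1) with hs
  have hs0 : 0 < s := one_div_pos.2 (by linarith)
  have hqs : (q1 + q2) / (p - 1) = (q1 + q2) * s := by rw [hs]; ring
  have hqs0 : 0 < (q1 + q2) * s := by positivity
  have hc : (0 : ℝ) < 2 * N + 1 := by positivity
  have hk : (0 : ℝ) < (2 : ℝ) ^ k := by positivity
  have hck : 0 < (2 * N + 1) * (2 : ℝ) ^ k := by positivity
  rw [hqs, gridTerm_rpow _ _ _ _ _ hq1.le, gridTerm_rpow _ _ _ _ _ hq2.le, gridTerm, gridTerm]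
  calc _ = ENNReal.ofReal ((2 * N + 1) ^ ((N - g) * ((q1 + q2) * s))) *
        (gridMass μ k x / ENNReal.ofReal (((2 * N + 1) * (2 : ℝ) ^ k) ^ ((N : ℝ) - g))) ^
          ((q1 + q2) * s) := by
        rw [div_ofReal_rpow hck _ _ hqs0.le, Real.mul_rpow hc.le hk.le,
          mul_left_comm (ENNReal.ofReal _), ← ENNReal.ofReal_mul (by positivity), ← mul_assoc (((2 : ℝ) * N + 1) ^ _),
          ← Real.rpow_add hc, add_neg_cancel, Real.rpow_zero, one_mul, mul_mul_mul_comm,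
          ← ENNReal.rpow_add_of_nonneg _ _ (by positivity) (by positivity),
          ← ENNReal.rpow_add _ _ (by simp) (by simp), ← two_rpow_neg_eq_ofReal]
        congr 2
        · ring
        · linear_combination -(s * k * hg)
    _ ≤ _ := by
        gcongr
        refine le_trans ?_ (le_iSup₂_of_le ((2 * N + 1) * (2 : ℝ) ^ k) hck
          (le_iSup_of_le ENNReal.ofReal_lt_top le_rfl))
        gcongr
        exact measure_mono (gridNbhd_subset_ball k x)

lemma sum_range_gridTerm_eq {N : ℕ} (μ : Measure (Euc N)) (s E : ℝ) (m : ℕ) (x : Euc N) :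
    ∑ n ∈ Finset.range (2 * m + 1), gridTerm μ s E (m - n) x =
      ∑ j ∈ Finset.Icc (-(m : ℤ)) m, gridTerm μ s E j x := by
  have : Finset.Icc (-(m : ℤ)) m = (Finset.range (2 * m + 1)).image fun n : ℕ => (m : ℤ) - n := by
    ext j
    simp only [Finset.mem_Icc, Finset.mem_image, Finset.mem_range]
    constructor
    · intro h
      exact ⟨(m - j).toNat, by omega, by omega⟩
    · rintro ⟨n, hn, rfl⟩
      omega
  rw [this, Finset.sum_image fun a _ b _ h => by simpa using h]

lemma monotone_sum_Icc_gridTerm {N : ℕ} (μ : Measure (Euc N)) (s E : ℝ) (x : Euc N) :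
    Monotone fun m : ℕ => ∑ j ∈ Finset.Icc (-(m : ℤ)) m, gridTerm μ s E j x := fun m n h =>
  Finset.sum_le_sum_of_subset (Finset.Icc_subset_Icc (by omega) (by omega))

lemma tsum_gridTerm_eq_iSup {N : ℕ} (μ : Measure (Euc N)) (s E : ℝ) (x : Euc N) :
    ∑' k : ℤ, gridTerm μ s E k x =
      ⨆ m : ℕ, ∑ j ∈ Finset.Icc (-(m : ℤ)) m, gridTerm μ s E j x := by
  refine ENNReal.tsum_eq_iSup_sum' _ fun t => ⟨t.sup Int.natAbs, fun j hj => ?_⟩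
  have : j.natAbs ≤ t.sup Int.natAbs := Finset.le_sup hj
  rw [Finset.mem_Icc]
  omega

lemma iSup_rpow_mul_iSup_rpow_le {u v : ℕ → ℝ≥0∞} (hu : Monotone u) (hv : Monotone v) {q1 q2 : ℝ}
    (hq1 : 0 < q1) (hq2 : 0 < q2) :
    (⨆ m, u m) ^ q1 * (⨆ m, v m) ^ q2 ≤ ⨆ m, u m ^ q1 * v m ^ q2 := by
  have h1 : (⨆ m, u m) ^ q1 = ⨆ m, u m ^ q1 := (ENNReal.orderIsoRpow q1 hq1).map_iSup u
  have h2 : (⨆ m, v m) ^ q2 = ⨆ m, v m ^ q2 := (ENNReal.orderIsoRpow q2 hq2).map_iSup v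
  rw [h1, h2, ENNReal.iSup_mul]
  refine iSup_le fun i => ?_
  rw [ENNReal.mul_iSup]
  refine iSup_le fun j => le_iSup_of_le (max i j) ?_
  have := hu (le_max_left i j)
  have := hv (le_max_right i j)
  gcongr

/-- The integral of a product of powers of Wolff potentials is controlled by the fractional maximal
function of intermediate order. -/
theorem lintegral_wolff_mul_wolff_le (N : ℕ) {α β g p q1 q2 : ℝ} (hp : 1 < p)
    (hα : 0 ≤ N - α * p) (hβ : 0 < β) (hαβ : β ≤ α) (hq1 : 0 < q1) (hq2 : 0 < q2)
    (hβq : (N - β * p) * q2 < N * (p - 1)) (hg : (q1 + q2) * g = (α * q1 + β * q2) * p) :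
    ∃ C : ℝ≥0∞, C ≠ ⊤ ∧ ∀ (μ : Measure (Euc N)) [IsLocallyFiniteMeasure μ],
      ∫⁻ x, wolff α p ⊤ μ x ^ q1 * wolff β p ⊤ μ x ^ q2 ≤
        C * ∫⁻ x, fracMax g ⊤ μ x ^ ((q1 + q2) / (p - 1)) := by
  set s : ℝ := 1 / (p - 1) with hs
  have hp1 : 0 < p - 1 := by linarith
  have hs0 : 0 < s := one_div_pos.2 hp1
  have hβN : (0 : ℝ) ≤ N - β * p := by nlinarith
  set A : ℝ := (N - α * p) * s with hA
  set B : ℝ := (N - β * p) * s with hB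
  have hAB : A ≤ B := by
    rw [hA, hB]
    gcongr
  have hBN : B < N * s := by
    rw [hB]
    have : 0 < β * p := by positivity
    gcongr
    linarith
  have hBq : B * q2 < N := by
    rw [hB, hs, mul_right_comm, mul_one_div, div_lt_iff₀ hp1]
    exact hβq
  obtain ⟨C, hC, H⟩ := lintegral_sum_gridTerm_mul_le N hs0 hAB hBN hq1 hq2 hBq
  set c : ℝ≥0∞ := ENNReal.ofReal ((2 * N + 1) ^ ((N - g) * ((q1 + q2) / (p - 1)))) with hc
  set c' : ℝ≥0∞ := (2 ^ A) ^ q1 * (2 ^ B) ^ q2 with hc'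
  have hct : c ≠ ⊤ := ENNReal.ofReal_ne_top
  have hct' : c' ≠ ⊤ := ENNReal.mul_ne_top (ENNReal.rpow_ne_top_of_nonneg hq1.le (by simp))
    (ENNReal.rpow_ne_top_of_nonneg hq2.le (by simp))
  refine ⟨c' * (C * c), by finiteness, fun μ _ => ?_⟩
  set S : ℝ → ℕ → Euc N → ℝ≥0∞ := fun E m x =>
    ∑ j ∈ Finset.Icc (-(m : ℤ)) m, gridTerm μ s E j x with hS
  have hSm : ∀ E x, Monotone fun m => S E m x := fun E x => monotone_sum_Icc_gridTerm μ s E x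
  have hSM : ∀ E m, Measurable (S E m) := fun E m =>
    Finset.measurable_sum _ fun j _ => measurable_gridTerm μ s E j
  have hW : ∀ x, wolff α p ⊤ μ x ^ q1 * wolff β p ⊤ μ x ^ q2 ≤
      c' * ⨆ m, S A m x ^ q1 * S B m x ^ q2 := fun x => by
    have h1 := wolff_le_tsum_gridTerm hp hα μ x
    have h2 := wolff_le_tsum_gridTerm hp hβN μ x
    rw [tsum_gridTerm_eq_iSup] at h1 h2
    calc _ ≤ (2 ^ A * ⨆ m, S A m x) ^ q1 * (2 ^ B * ⨆ m, S B m x) ^ q2 := by gcongr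
      _ = c' * ((⨆ m, S A m x) ^ q1 * (⨆ m, S B m x) ^ q2) := by
          rw [ENNReal.mul_rpow_of_nonneg _ _ hq1.le, ENNReal.mul_rpow_of_nonneg _ _ hq2.le, hc']
          ring
      _ ≤ _ := by
          gcongr
          exact iSup_rpow_mul_iSup_rpow_le (hSm A x) (hSm B x) hq1 hq2
  calc _ ≤ ∫⁻ x, c' * ⨆ m, S A m x ^ q1 * S B m x ^ q2 := lintegral_mono hW
    _ = c' * ⨆ m, ∫⁻ x, S A m x ^ q1 * S B m x ^ q2 := by
        rw [lintegral_const_mul' _ _ hct', lintegral_iSup]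
        · exact fun m => ((hSM A m).pow_const _).mul ((hSM B m).pow_const _)
        · intro m n h x
          have h1 := hSm A x h
          have h2 := hSm B x h
          dsimp only at h1 h2 ⊢
          gcongr
    _ ≤ c' * (C * ∫⁻ x, c * fracMax g ⊤ μ x ^ ((q1 + q2) / (p - 1))) := by
        gcongr
        refine iSup_le fun m => ?_
        simp only [hS, ← sum_range_gridTerm_eq]
        exact H μ m (2 * m) _ fun n x => gridTerm_mul_le_fracMax hp hq1 hq2 hg μ _ x
    _ = _ := by
        rw [lintegral_const_mul' _ _ hct]
        ring

/-- Comparability in `L^1(ℝ^N)` of the fractional maximal function,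
the Wolff potential of intermediate order, and the product of Wolff potentials. -/
theorem stmt9 (N : ℕ) (α β p q1 q2 : ℝ) (hα : 0 < α) (hβ : 0 < β)
    (hq1 : 0 < q1) (hq2 : 0 < q2) (hαβ : β < α) (hp : 1 < p) (hpN : p < (N : ℝ) / α)
    (hq : p - 1 < q1 + q2) (hq2' : q2 < (N : ℝ) * (p - 1) / ((N : ℝ) - β * p))
    (hγ : (α * p * q1 + β * p * q2) / (q1 + q2) < (N : ℝ)) :
    ∃ C > 0, ∀ μ : Measure (Euc N), IsLocallyFiniteMeasure μ →
      ((∫⁻ x, (fracMax ((α * p * q1 + β * p * q2) / (q1 + q2)) ⊤ μ x) ^ ((q1 + q2) / (p - 1))) ≤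
          ENNReal.ofReal C *
            ∫⁻ x, (wolff ((α * q1 + β * q2) / (q1 + q2)) p ⊤ μ x) ^ (q1 + q2)) ∧
      ((∫⁻ x, (wolff ((α * q1 + β * q2) / (q1 + q2)) p ⊤ μ x) ^ (q1 + q2)) ≤
          ENNReal.ofReal C *
            ∫⁻ x, (fracMax ((α * p * q1 + β * p * q2) / (q1 + q2)) ⊤ μ x) ^ ((q1 + q2) / (p - 1))) ∧
      ((∫⁻ x, (wolff ((α * q1 + β * q2) / (q1 + q2)) p ⊤ μ x) ^ (q1 + q2)) ≤
          ENNReal.ofReal C *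
            ∫⁻ x, (wolff α p ⊤ μ x) ^ q1 * (wolff β p ⊤ μ x) ^ q2) ∧
      ((∫⁻ x, (wolff α p ⊤ μ x) ^ q1 * (wolff β p ⊤ μ x) ^ q2) ≤
          ENNReal.ofReal C *
            ∫⁻ x, (wolff ((α * q1 + β * q2) / (q1 + q2)) p ⊤ μ x) ^ (q1 + q2)) ∧
      ((∫⁻ x, (fracMax ((α * p * q1 + β * p * q2) / (q1 + q2)) ⊤ μ x) ^ ((q1 + q2) / (p - 1))) ≤
          ENNReal.ofReal C *
            ∫⁻ x, (wolff α p ⊤ μ x) ^ q1 * (wolff β p ⊤ μ x) ^ q2) ∧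
      ((∫⁻ x, (wolff α p ⊤ μ x) ^ q1 * (wolff β p ⊤ μ x) ^ q2) ≤
          ENNReal.ofReal C *
            ∫⁻ x, (fracMax ((α * p * q1 + β * p * q2) / (q1 + q2)) ⊤ μ x) ^ ((q1 + q2) / (p - 1))) := by
  have hq0 : 0 < q1 + q2 := by positivity
  have hp0 : 0 < p := by linarith
  have hp1 : 0 < p - 1 := by linarith
  have hαN : (0 : ℝ) < N - α * p := by
    rw [lt_div_iff₀ hα] at hpN
    linarith
  have hβN : (0 : ℝ) < N - β * p := by nlinarith
  set γ : ℝ := (α * q1 + β * q2) / (q1 + q2) with hγdef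
  set g : ℝ := (α * p * q1 + β * p * q2) / (q1 + q2) with hgdef
  have hγq : (q1 + q2) * γ = α * q1 + β * q2 := mul_div_cancel₀ _ hq0.ne'
  have hgγ : g = γ * p := by rw [hgdef, hγdef]; ring
  have hγ0 : 0 < γ := by positivity
  have hγN : (0 : ℝ) < N - γ * p := by linarith
  have hgprod : (q1 + q2) * g = (α * q1 + β * q2) * p := by rw [hgγ, ← mul_assoc, hγq]
  -- Split the exponent of the intermediate potential so that the second part is small.
  obtain ⟨r2, hr2, hr2q, hr2N⟩ : ∃ r2 : ℝ, 0 < r2 ∧ r2 < q1 + q2 ∧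
      (N - γ * p) * r2 < N * (p - 1) := by
    have hN : 0 < (N : ℝ) * (p - 1) := mul_pos (by nlinarith) hp1
    refine ⟨min ((q1 + q2) / 2) (N * (p - 1) / (N - γ * p) / 2),
      lt_min (by positivity) (by positivity), (min_le_left _ _).trans_lt (by linarith), ?_⟩
    refine (mul_le_mul_of_nonneg_left (min_le_right _ _) hγN.le).trans_lt ?_
    rw [mul_div_assoc', mul_div_cancel₀ _ hγN.ne']
    linarith
  have hr1 : 0 < q1 + q2 - r2 := by linarith
  have hr : q1 + q2 - r2 + r2 = q1 + q2 := by ring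
  have hgself : (q1 + q2 - r2 + r2) * g = (γ * (q1 + q2 - r2) + γ * r2) * p := by
    rw [hgγ]; ring
  obtain ⟨C₁, hC₁, H₁⟩ := fracMax_rpow_le N hp hγN.le hγN.le hr1 hr2 hgself
  obtain ⟨C₂, hC₂, H₂⟩ :=
    lintegral_wolff_mul_wolff_le N hp hγN.le hγ0 le_rfl hr1 hr2 hr2N hgself
  obtain ⟨C₃, hC₃, H₃⟩ := fracMax_rpow_le N hp hαN.le hβN.le hq1 hq2 hgprod
  obtain ⟨C₄, hC₄, H₄⟩ := lintegral_wolff_mul_wolff_le N hp hαN.le hβ hαβ.le hq1 hq2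
    (by rwa [lt_div_iff₀ hβN, mul_comm] at hq2') hgprod
  simp only [← ENNReal.rpow_add_of_nonneg _ _ hr1.le hr2.le, hr] at H₁ H₂
  set D : ℝ≥0∞ := C₁ + C₂ + C₃ + C₄ + C₂ * C₃ + C₄ * C₁ with hD
  have hDt : D ≠ ⊤ := by finiteness
  have hDC : D ≤ ENNReal.ofReal (D.toReal + 1) := by
    rw [ENNReal.le_ofReal_iff_toReal_le hDt (by positivity)]
    linarith
  refine ⟨D.toReal + 1, by positivity, fun μ _ => ?_⟩
  have I₁ : ∫⁻ x, fracMax g ⊤ μ x ^ ((q1 + q2) / (p - 1)) ≤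
      C₁ * ∫⁻ x, wolff γ p ⊤ μ x ^ (q1 + q2) := by
    rw [← lintegral_const_mul' _ _ hC₁]
    exact lintegral_mono (H₁ μ)
  have I₂ := H₂ μ
  have I₃ : ∫⁻ x, fracMax g ⊤ μ x ^ ((q1 + q2) / (p - 1)) ≤
      C₃ * ∫⁻ x, wolff α p ⊤ μ x ^ q1 * wolff β p ⊤ μ x ^ q2 := by
    rw [← lintegral_const_mul' _ _ hC₃]
    exact lintegral_mono (H₃ μ)
  have I₄ := H₄ μ
  have enlarge : ∀ {a b E : ℝ≥0∞}, a ≤ E * b → E ≤ D → a ≤ ENNReal.ofReal (D.toReal + 1) * b :=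
    fun h hE => h.trans (by gcongr; exact hE.trans hDC)
  have hD₁ : C₁ ≤ D := by rw [hD]; simp only [add_assoc]; exact le_self_add
  have hD₂ : C₂ ≤ D := by rw [hD, add_comm C₁ C₂]; simp only [add_assoc]; exact le_self_add
  have hD₃ : C₃ ≤ D := by
    rw [hD, add_comm _ C₃]; simp only [add_assoc]; exact le_self_add
  have hD₄ : C₄ ≤ D := by
    rw [hD, add_comm _ C₄]; simp only [add_assoc]; exact le_self_add
  have hD₅ : C₂ * C₃ ≤ D := by
    rw [hD, add_comm _ (C₂ * C₃)]; simp only [add_assoc]; exact le_self_add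
  have hD₆ : C₄ * C₁ ≤ D := by rw [hD]; exact le_add_self
  refine ⟨enlarge I₁ hD₁, enlarge I₂ hD₂, enlarge ?_ hD₅, enlarge ?_ hD₆, enlarge I₃ hD₃,
    enlarge I₄ hD₄⟩
  · rw [mul_assoc]
    exact I₂.trans (by gcongr)
  · rw [mul_assoc]
    exact I₄.trans (by gcongr)
end
end
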